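/- arXiv:1710.10660 — 2 statements merged into one kernel-verified Lean document; each statement's English description precedes it below -/
import Mathlib

section
/- For every entangling E of a permutation π, the map Λ(E) (making each σ ∈ E a part and each remaining element a singleton part) yields d(E) = k − Σ_{σ∈E}(|σ|−1) parts. Moreover there is a sign vector S ∈ {+,−}^{|Λ(E)|} such that the signed partition (Λ(E), S) is unique; consequently d(π) ≤ u(π). -/
/-- Minimum value of `π` on the consecutive subsequence given by position interval `σ`. -/
noncomputable def pmin (π : ℕ → ℕ) (σ : ℕ × ℕ) : ℕ := sInf (π '' Set.Icc σ.1 σ.2)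

/-- Maximum value of `π` on the consecutive subsequence given by position interval `σ`. -/
noncomputable def pmax (π : ℕ → ℕ) (σ : ℕ × ℕ) : ℕ := sSup (π '' Set.Icc σ.1 σ.2)

/-- `σ'` is shadowed with respect to `σ` (both consecutive subsequences of `π`). -/
def Shadowed (π : ℕ → ℕ) (σ σ' : ℕ × ℕ) : Prop :=
  ∃ m M, m ∈ Set.Icc σ'.1 σ'.2 ∧ M ∈ Set.Icc σ'.1 σ'.2 ∧
    (∀ c ∈ Set.Icc σ'.1 σ'.2, π m ≤ π c ∧ π c ≤ π M) ∧
    ((σ.2 < σ'.1 ∧ m < M ∧ π M < π (σ'.1 - 1)) ∨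
     (σ.2 < σ'.1 ∧ M < m ∧ π (σ'.1 - 1) < π m) ∨
     (σ'.2 < σ.1 ∧ m < M ∧ π (σ'.2 + 1) < π m) ∨
     (σ'.2 < σ.1 ∧ M < m ∧ π M < π (σ'.2 + 1)))

/-- Minimum of the minima of parts `E 0, …, E (j-1)`. -/
noncomputable def prevMin (π : ℕ → ℕ) (E : List (ℕ × ℕ)) (j : ℕ) : ℕ :=
  sInf {v | ∃ i < j, v = pmin π (E.getD i (0, 0))}

/-- Maximum of the maxima of parts `E 0, …, E (j-1)`. -/
noncomputable def prevMax (π : ℕ → ℕ) (E : List (ℕ × ℕ)) (j : ℕ) : ℕ :=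
  sSup {v | ∃ i < j, v = pmax π (E.getD i (0, 0))}

/-- `E` is an entangling of the permutation `π` of length `k`: a list of pairwise disjoint
consecutive subsequences (given by position intervals, each of length ≥ 2) satisfying the
nesting, non-shadowing and covering conditions. -/
structure IsEntangling (k : ℕ) (π : ℕ → ℕ) (E : List (ℕ × ℕ)) : Prop where
  nonempty : E ≠ []
  valid : ∀ σ ∈ E, 1 ≤ σ.1 ∧ σ.1 < σ.2 ∧ σ.2 ≤ k
  disj : List.Pairwise (fun σ τ => Disjoint (Set.Icc σ.1 σ.2) (Set.Icc τ.1 τ.2)) E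
  nest : ∀ j, 1 ≤ j → j < E.length →
    ((E.getD 0 (0, 0)).2 < (E.getD j (0, 0)).1 ∧
      prevMin π E j < π (E.getD j (0, 0)).1 ∧ π (E.getD j (0, 0)).1 < prevMax π E j) ∨
    ((E.getD j (0, 0)).2 < (E.getD 0 (0, 0)).1 ∧
      prevMin π E j < π (E.getD j (0, 0)).2 ∧ π (E.getD j (0, 0)).2 < prevMax π E j)
  notShadowed : ∀ j, 1 ≤ j → j < E.length →
    ¬ Shadowed π (E.getD 0 (0, 0)) (E.getD j (0, 0))
  cover : ∀ v, 1 ≤ v → v ≤ k → ∃ σ ∈ E, pmin π σ ≤ v ∧ v ≤ pmax π σ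

/-- `d(E) = k - Σ_{σ ∈ E} (|σ| - 1)`, the number of parts of the partition `Λ(E)`. -/
def dval (k : ℕ) (E : List (ℕ × ℕ)) : ℕ := k - (E.map fun σ => σ.2 - σ.1).sum

/-- `idx` is a `π`-copy in `f` (entries indexed over `[1, k²]`). -/
def IsPatternAt (k : ℕ) (π : ℕ → ℕ) (f : ℕ → ℝ) (idx : ℕ → ℕ) : Prop :=
  StrictMonoOn idx (Set.Icc 1 k) ∧ (∀ a ∈ Set.Icc 1 k, idx a ∈ Set.Icc 1 (k * k)) ∧
  ∀ a ∈ Set.Icc 1 k, ∀ b ∈ Set.Icc 1 k, (f (idx a) < f (idx b) ↔ π a < π b)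

/-- A trivial `π`-copy: all its values lie in a common open unit interval `(m, m+1)`. -/
def TrivialCopy (k : ℕ) (f : ℕ → ℝ) (idx : ℕ → ℕ) : Prop :=
  ∃ m < k, ∀ a ∈ Set.Icc 1 k, (m : ℝ) < f (idx a) ∧ f (idx a) < (m : ℝ) + 1

/-- The defining equations of the sequence `f_P : [k²] → ℝ` associated with the signed
partition with boundaries `r` and signs `s`. -/
def FPEq (k u : ℕ) (π : ℕ → ℕ) (r : ℕ → ℕ) (s : ℕ → Bool) (f : ℕ → ℝ) : Prop :=
  ∀ i, 1 ≤ i → i ≤ u → ∀ m < k, ∀ j, 1 ≤ j → j ≤ r i - r (i - 1) →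
    f (r (i - 1) * k + m * (r i - r (i - 1)) + j) =
      (if s i then (m : ℝ) else (k : ℝ) - 1 - (m : ℝ)) + (π (r (i - 1) + j) : ℝ) / (2 * k)

/-- `(r, s)` is a signed partition of `π` of size `u`. -/
def IsSignedPartition (k u : ℕ) (π : ℕ → ℕ) (r : ℕ → ℕ) (s : ℕ → Bool) : Prop :=
  r 0 = 0 ∧ r u = k ∧ StrictMonoOn r (Set.Icc 0 u) ∧
  ∀ i, 1 ≤ i → i ≤ u → 1 < r i - r (i - 1) →
    ∀ a ∈ Set.Icc (r (i - 1) + 1) (r i), ∀ b ∈ Set.Icc (r (i - 1) + 1) (r i),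
      (∀ c ∈ Set.Icc (r (i - 1) + 1) (r i), π a ≤ π c ∧ π c ≤ π b) →
      (s i = false ↔ a < b)

/-- A unique signed partition: the associated sequence `f_P` has only trivial `π`-copies. -/
def UniqueSP (k u : ℕ) (π : ℕ → ℕ) (r : ℕ → ℕ) (s : ℕ → Bool) : Prop :=
  IsSignedPartition k u π r s ∧
  ∀ f : ℕ → ℝ, FPEq k u π r s f → ∀ idx, IsPatternAt k π f idx → TrivialCopy k f idx

/-- The entangling number `d(π)`. -/
noncomputable def entNum (k : ℕ) (π : ℕ → ℕ) : ℕ :=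
  sSup {d | ∃ E, IsEntangling k π E ∧ d = dval k E}

/-- The unique signed partition number `u(π)`. -/
noncomputable def uspn (k : ℕ) (π : ℕ → ℕ) : ℕ :=
  sSup {u | ∃ r s, UniqueSP k u π r s}

/-- The entries `π x`, `π y` are weakly ordered against the sign `b`: decreasing if `b` is `+`,
increasing if `b` is `-`. -/
def SignLe (π : ℕ → ℕ) (b : Bool) (x y : ℕ) : Prop :=
  (b = true → π y ≤ π x) ∧ (b = false → π x ≤ π y)

/-- The signs are chosen so that every part has its extreme entries in the order opposite to its
sign, and the parts other than part `i₁` are not shadowed with respect to part `i₁`. -/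
def GoodSigns (u : ℕ) (π r : ℕ → ℕ) (s : ℕ → Bool) (i₁ : ℕ) : Prop :=
  ∀ i, 1 ≤ i → i ≤ u → ∃ e e', r (i - 1) + 1 ≤ e ∧ e ≤ e' ∧ e' ≤ r i ∧
    (∀ c ∈ Set.Icc (r (i - 1) + 1) (r i), SignLe π (s i) e c ∧ SignLe π (s i) c e') ∧
    (i₁ < i → SignLe π (s i) (r (i - 1)) e') ∧ (i < i₁ → SignLe π (s i) e (r i + 1))

/-- The height of the copy numbered `m` in part `i`. -/
def height (k : ℕ) (s : ℕ → Bool) (i m : ℕ) : ℕ := if s i then m else k - 1 - m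

/-- The coordinates of a `π`-copy in `f_P`: the entry `a` lies in the block of part `B a`, in the
copy numbered `m a`, and repeats the entry `π (p a)`. -/
structure CopyData (k u : ℕ) (π r : ℕ → ℕ) (s : ℕ → Bool) (B m p : ℕ → ℕ) : Prop where
  block : ∀ a ∈ Set.Icc 1 k, 1 ≤ B a ∧ B a ≤ u
  copy : ∀ a ∈ Set.Icc 1 k, m a < k
  base : ∀ a ∈ Set.Icc 1 k, p a ∈ Set.Icc (r (B a - 1) + 1) (r (B a))
  lex : ∀ a ∈ Set.Icc 1 k, ∀ b ∈ Set.Icc 1 k, a < b →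
    B a < B b ∨ B a = B b ∧ (m a < m b ∨ m a = m b ∧ p a < p b)
  order : ∀ a ∈ Set.Icc 1 k, ∀ b ∈ Set.Icc 1 k,
    (2 * k * height k s (B a) (m a) + π (p a) < 2 * k * height k s (B b) (m b) + π (p b) ↔
      π a < π b)

/-- A strictly increasing function on an interval of naturals that is a translation at two points
is a translation between them. -/
lemma translation_between {k C c d e : ℕ} {G : ℕ → ℕ} (hG : StrictMonoOn G (Set.Icc 1 k))
    (hc : 1 ≤ c) (hce : c ≤ e) (hed : e ≤ d) (hd : d ≤ k) (h1 : G c = C + c)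
    (h2 : G d = C + d) : G e = C + e := by
  have step : ∀ n x, 1 ≤ x → x + n ≤ k → G x + n ≤ G (x + n) := by
    intro n
    induction n with
    | zero => intro x _ _; simp
    | succ n ih =>
      intro x hx hn
      have h3 := ih x hx (by omega)
      have h4 : G (x + n) < G (x + (n + 1)) :=
        hG ⟨by omega, by omega⟩ ⟨by omega, by omega⟩ (by omega)
      omega
  have h3 := step (e - c) c hc (by omega)
  have h4 := step (d - e) e (by omega) (by omega)
  rw [show c + (e - c) = e by omega] at h3
  rw [show e + (d - e) = d by omega] at h4
  omega

/-- A strictly increasing map between intervals of naturals has a target at least as long as its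
source, and it is the identity if the two intervals agree. -/
lemma strictMono_interval {x y l t : ℕ} {p : ℕ → ℕ} (hlt : l ≤ t)
    (hp : ∀ a ∈ Set.Icc l t, p a ∈ Set.Icc x y)
    (hmono : ∀ a ∈ Set.Icc l t, ∀ b ∈ Set.Icc l t, a < b → p a < p b) :
    t - l ≤ y - x ∧ (l = x → t = y → ∀ a ∈ Set.Icc l t, p a = a) := by
  have step : ∀ n a, l ≤ a → a + n ≤ t → p a + n ≤ p (a + n) := by
    intro n
    induction n with
    | zero => intro x _ _; simp
    | succ n ih =>
      intro a ha hn
      have h3 := ih a ha (by omega)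
      have h4 : p (a + n) < p (a + (n + 1)) :=
        hmono _ ⟨by omega, by omega⟩ _ ⟨by omega, by omega⟩ (by omega)
      omega
  have hl := hp l ⟨le_refl _, hlt⟩
  have ht := hp t ⟨hlt, le_refl _⟩
  simp only [Set.mem_Icc] at hl ht
  constructor
  · have h3 := step (t - l) l le_rfl (by omega)
    rw [show l + (t - l) = t by omega] at h3
    omega
  · rintro rfl rfl a ⟨h1, h2⟩
    have h3 := step (a - l) l le_rfl (by omega)
    have h4 := step (t - a) a h1 (by omega)
    rw [show l + (a - l) = a by omega] at h3
    rw [show a + (t - a) = t by omega] at h4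
    omega

lemma boundary_lt {u : ℕ} {r : ℕ → ℕ} (hr : StrictMonoOn r (Set.Icc 0 u)) {i : ℕ} (hi : 1 ≤ i) (hiu : i ≤ u) :
    r (i - 1) < r i := hr ⟨by omega, by omega⟩ ⟨by omega, hiu⟩ (by omega)

lemma boundary_le {k u : ℕ} {r : ℕ → ℕ} (hr : StrictMonoOn r (Set.Icc 0 u)) (hru : r u = k)
    {i : ℕ} (hiu : i ≤ u) : r i ≤ k := hru ▸ hr.monotoneOn ⟨by omega, hiu⟩ ⟨by omega, le_rfl⟩ hiu

namespace CopyData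

variable {k u : ℕ} {π r : ℕ → ℕ} {s : ℕ → Bool} {B m p : ℕ → ℕ}

lemma block_mono (D : CopyData k u π r s B m p) {a b : ℕ} (ha : 1 ≤ a) (hab : a ≤ b)
    (hb : b ≤ k) : B a ≤ B b := by
  rcases hab.eq_or_lt with rfl | h
  · exact le_rfl
  · have := D.lex a ⟨ha, by omega⟩ b ⟨by omega, hb⟩ h
    omega

lemma copy_mono (D : CopyData k u π r s B m p) {a b : ℕ} (ha : 1 ≤ a) (hab : a ≤ b)
    (hb : b ≤ k) (hB : B a = B b) : m a ≤ m b := by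
  rcases hab.eq_or_lt with rfl | h
  · exact le_rfl
  · have := D.lex a ⟨ha, by omega⟩ b ⟨by omega, hb⟩ h
    omega

lemma base_mem (D : CopyData k u π r s B m p) (hr : StrictMonoOn r (Set.Icc 0 u))
    (hru : r u = k) {a : ℕ} (ha : a ∈ Set.Icc 1 k) : p a ∈ Set.Icc 1 k := by
  have h1 := D.base a ha
  have h2 := D.block a ha
  have h3 : r (B a) ≤ r u := hr.monotoneOn ⟨by omega, h2.2⟩ ⟨by omega, le_rfl⟩ h2.2
  simp only [Set.mem_Icc] at h1 ⊢
  omega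

lemma lt_of_height_lt (D : CopyData k u π r s B m p) (hr : StrictMonoOn r (Set.Icc 0 u))
    (hru : r u = k) (hπ : Set.BijOn π (Set.Icc 1 k) (Set.Icc 1 k)) {a b : ℕ}
    (ha : a ∈ Set.Icc 1 k) (hb : b ∈ Set.Icc 1 k)
    (h : height k s (B a) (m a) < height k s (B b) (m b)) : π a < π b := by
  rw [← D.order a ha b hb]
  have h1 := hπ.mapsTo (D.base_mem hr hru ha)
  have h2 := hπ.mapsTo (D.base_mem hr hru hb)
  simp only [Set.mem_Icc] at h1 h2 ha
  have h3 : 2 * k * (height k s (B a) (m a) + 1) ≤ 2 * k * height k s (B b) (m b) :=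
    Nat.mul_le_mul_left _ h
  rw [Nat.mul_add] at h3
  omega

/-- Entries of a block that are ordered against its sign lie in the same copy. -/
lemma copy_eq (D : CopyData k u π r s B m p) (hr : StrictMonoOn r (Set.Icc 0 u))
    (hru : r u = k) (hπ : Set.BijOn π (Set.Icc 1 k) (Set.Icc 1 k)) {a b : ℕ}
    (ha : 1 ≤ a) (hab : a ≤ b) (hb : b ≤ k) (hB : B a = B b)
    (hs : SignLe π (s (B a)) a b) : m a = m b := by
  by_contra hne
  have hlt : m a < m b := lt_of_le_of_ne (D.copy_mono ha hab hb hB) hne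
  have ha' : a ∈ Set.Icc 1 k := ⟨ha, by omega⟩
  have hb' : b ∈ Set.Icc 1 k := ⟨by omega, hb⟩
  have hmb := D.copy b hb'
  rcases hsv : s (B a) with _ | _
  · have := D.lt_of_height_lt hr hru hπ hb' ha' (by
      simp only [height, ← hB, hsv]; simp; omega)
    have := hs.2 hsv
    omega
  · have := D.lt_of_height_lt hr hru hπ ha' hb' (by
      simp only [height, ← hB, hsv]; simpa using hlt)
    have := hs.1 hsv
    omega

/-- A stretch of entries in one block whose ends are compatible with intermediate extremes lies
in one copy. -/
lemma stretch (D : CopyData k u π r s B m p) (hr : StrictMonoOn r (Set.Icc 0 u))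
    (hru : r u = k) (hπ : Set.BijOn π (Set.Icc 1 k) (Set.Icc 1 k)) {l e e' t i : ℕ}
    (hl : 1 ≤ l) (hle : l ≤ e) (hee : e ≤ e') (het : e' ≤ t) (ht : t ≤ k)
    (hBl : B l = i) (hBt : B t = i)
    (h1 : SignLe π (s i) l e') (h2 : SignLe π (s i) e t) :
    (∀ a ∈ Set.Icc l t, B a = i ∧ m a = m l) ∧ t - l ≤ r i - (r (i - 1) + 1) ∧
    (l = r (i - 1) + 1 → t = r i → ∀ a ∈ Set.Icc l t, p a = a) := by
  have hB : ∀ a ∈ Set.Icc l t, B a = i := by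
    rintro a ⟨ha1, ha2⟩
    have h3 := D.block_mono hl ha1 (by omega)
    have h4 := D.block_mono (by omega) ha2 ht
    omega
  have hBe := hB e ⟨hle, by omega⟩
  have hBe' := hB e' ⟨by omega, het⟩
  have q1 : m l = m e' :=
    D.copy_eq hr hru hπ hl (by omega) (by omega) (by omega) (by rwa [hBl])
  have q2 : m e = m t :=
    D.copy_eq hr hru hπ (by omega) (by omega) (by omega) (by omega) (by rwa [hBe])
  have q3 := D.copy_mono (by omega) hee (by omega) (by omega)
  have hm : ∀ a ∈ Set.Icc l t, m a = m l := by
    intro a ha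
    have h3 := D.copy_mono hl ha.1 (by have := ha.2; omega) (by rw [hBl, hB a ha])
    have h4 := D.copy_mono (by have := ha.1; omega) ha.2 ht (by rw [hBt, hB a ha])
    omega
  refine ⟨fun a ha => ⟨hB a ha, hm a ha⟩, ?_⟩
  apply strictMono_interval (by omega)
  · intro a ha
    have := D.base a ⟨by have := ha.1; omega, by have := ha.2; omega⟩
    rwa [hB a ha] at this
  · intro a ha b hb hab
    have h3 := D.lex a ⟨by have := ha.1; omega, by have := ha.2; omega⟩
      b ⟨by have := hb.1; omega, by have := hb.2; omega⟩ hab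
    rw [hB a ha, hB b hb, hm a ha, hm b hb] at h3
    omega

section

variable {i₁ : ℕ}

/-- The last entry of a part from part `i₁` on does not lie beyond its block. -/
lemma block_end_le (D : CopyData k u π r s B m p) (hr : StrictMonoOn r (Set.Icc 0 u))
    (hru : r u = k) (hπ : Set.BijOn π (Set.Icc 1 k) (Set.Icc 1 k))
    (hg : GoodSigns u π r s i₁) (h1 : 1 ≤ i₁) :
    ∀ n i, i₁ ≤ i → i + n = u → B (r i) ≤ i := by
  intro n
  induction n with
  | zero =>
    intro i hi hn
    have h2 := boundary_lt hr (i := i) (by omega) (by omega)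
    have := D.block (r i) ⟨by omega, boundary_le hr hru (by omega)⟩
    omega
  | succ n ih =>
    intro i hi hn
    by_contra hlt
    have h3 := ih (i + 1) (by omega) (by omega)
    have h2 := boundary_lt hr (i := i) (by omega) (by omega)
    have h4 := boundary_lt hr (i := i + 1) (by omega) (by omega)
    have h5 := boundary_le hr hru (i := i + 1) (by omega)
    simp only [Nat.add_sub_cancel] at h4
    have h6 := D.block_mono (a := r i) (b := r (i + 1)) (by omega) (by omega) h5
    obtain ⟨e, e', he1, he2, he3, hc, hR, -⟩ := hg (i + 1) (by omega) (by omega)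
    simp only [Nat.add_sub_cancel] at he1 hc hR
    have h7 := (D.stretch hr hru hπ (l := r i) (t := r (i + 1)) (i := i + 1) (by omega)
      (by omega) he2 he3 h5 (by omega) (by omega) (hR (by omega))
      (hc _ ⟨by omega, by omega⟩).1).2.1
    simp only [Nat.add_sub_cancel] at h7
    omega

/-- The first entry of a part up to part `i₁` does not lie before its block. -/
lemma le_block_start (D : CopyData k u π r s B m p) (hr : StrictMonoOn r (Set.Icc 0 u))
    (hr0 : r 0 = 0) (hru : r u = k) (hπ : Set.BijOn π (Set.Icc 1 k) (Set.Icc 1 k))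
    (hg : GoodSigns u π r s i₁) (h1 : i₁ ≤ u) :
    ∀ i, i + 1 ≤ i₁ → i + 1 ≤ B (r i + 1) := by
  intro i
  induction i with
  | zero =>
    intro hi
    have h2 := boundary_lt hr (i := 1) (by omega) (by omega)
    have h3 := boundary_le hr hru (i := 1) (by omega)
    have := D.block (r 0 + 1) ⟨by omega, by omega⟩
    omega
  | succ i ih =>
    intro hi
    by_contra hlt
    have h3 := ih (by omega)
    have h2 := boundary_lt hr (i := i + 1) (by omega) (by omega)
    have h4 := boundary_lt hr (i := i + 2) (by omega) (by omega)
    have h5 := boundary_le hr hru (i := i + 2) (by omega)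
    simp only [Nat.add_sub_cancel, show i + 2 - 1 = i + 1 by omega] at h2 h4
    have h6 := D.block_mono (a := r i + 1) (b := r (i + 1) + 1) (by omega) (by omega) (by omega)
    obtain ⟨e, e', he1, he2, he3, hc, -, hL⟩ := hg (i + 1) (by omega) (by omega)
    simp only [Nat.add_sub_cancel] at he1 hc hL
    have h7 := (D.stretch hr hru hπ (l := r i + 1) (t := r (i + 1) + 1) (i := i + 1) (by omega)
      (by omega) he2 (by omega) (by omega) (by omega) (by omega)
      (hc _ ⟨by omega, by omega⟩).2 (hL (by omega))).2.1
    simp only [Nat.add_sub_cancel] at h7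
    omega

/-- A part whose end entries lie in its own block is repeated entry by entry. -/
lemma part_aligned (D : CopyData k u π r s B m p) (hr : StrictMonoOn r (Set.Icc 0 u))
    (hru : r u = k) (hπ : Set.BijOn π (Set.Icc 1 k) (Set.Icc 1 k))
    (hg : GoodSigns u π r s i₁) {i : ℕ} (hi : 1 ≤ i) (hiu : i ≤ u)
    (hx : i ≤ B (r (i - 1) + 1)) (hy : B (r i) ≤ i) :
    ∀ a ∈ Set.Icc (r (i - 1) + 1) (r i), B a = i ∧ m a = m (r (i - 1) + 1) ∧ p a = a := by
  obtain ⟨e, e', he1, he2, he3, hc, -, -⟩ := hg i hi hiu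
  have h2 := boundary_lt hr hi hiu
  have h5 := boundary_le hr hru hiu
  have h6 := D.block_mono (a := r (i - 1) + 1) (b := r i) (by omega) (by omega) (by omega)
  obtain ⟨q1, -, q3⟩ := D.stretch hr hru hπ (l := r (i - 1) + 1) (t := r i) (i := i) (by omega)
      (by omega) he2 (by omega) (by omega) (by omega) (by omega)
      (hc _ ⟨by omega, by omega⟩).2 (hc _ ⟨by omega, by omega⟩).1
  exact fun a ha => ⟨(q1 a ha).1, (q1 a ha).2, q3 rfl rfl a ha⟩

end

/-- Between two aligned entries (in value), all entries are aligned. -/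
lemma aligned_between (D : CopyData k u π r s B m p) (hr : StrictMonoOn r (Set.Icc 0 u))
    (hru : r u = k) (hπ : Set.BijOn π (Set.Icc 1 k) (Set.Icc 1 k)) {h c d a : ℕ}
    (hc : c ∈ Set.Icc 1 k) (hd : d ∈ Set.Icc 1 k) (ha : a ∈ Set.Icc 1 k)
    (hca : π c ≤ π a) (had : π a ≤ π d)
    (h1 : height k s (B c) (m c) = h ∧ p c = c) (h2 : height k s (B d) (m d) = h ∧ p d = d) :
    height k s (B a) (m a) = h ∧ p a = a := by
  set ι := Function.invFunOn π (Set.Icc 1 k) with hι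
  have hmem : ∀ v ∈ Set.Icc 1 k, ι v ∈ Set.Icc 1 k := fun v hv =>
    Function.invFunOn_mem (hπ.surjOn hv)
  have hval : ∀ v ∈ Set.Icc 1 k, π (ι v) = v := fun v hv =>
    Function.invFunOn_eq (hπ.surjOn hv)
  have hinv : ∀ x ∈ Set.Icc 1 k, ι (π x) = x := fun x hx =>
    hπ.injOn (hmem _ (hπ.mapsTo hx)) hx (hval _ (hπ.mapsTo hx))
  let G : ℕ → ℕ := fun v => 2 * k * height k s (B (ι v)) (m (ι v)) + π (p (ι v))
  have hG : StrictMonoOn G (Set.Icc 1 k) := by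
    intro v hv w hw hvw
    exact (D.order _ (hmem v hv) _ (hmem w hw)).2 (by rwa [hval v hv, hval w hw])
  have key : G (π a) = 2 * k * h + π a := by
    refine translation_between hG (hπ.mapsTo hc).1 hca had (hπ.mapsTo hd).2 ?_ ?_
    · simp only [G, hinv c hc, h1.1, h1.2]
    · simp only [G, hinv d hd, h2.1, h2.2]
  simp only [G, hinv a ha] at key
  have b1 := hπ.mapsTo ha
  have hp := D.base_mem hr hru ha
  have b2 := hπ.mapsTo hp
  simp only [Set.mem_Icc] at b1 b2
  have hh : height k s (B a) (m a) = h := by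
    rcases lt_trichotomy (height k s (B a) (m a)) h with hlt | heq | hlt
    · have := Nat.mul_le_mul_left (2 * k) (Nat.succ_le_of_lt hlt)
      rw [Nat.succ_eq_add_one, Nat.mul_add] at this
      omega
    · exact heq
    · have := Nat.mul_le_mul_left (2 * k) (Nat.succ_le_of_lt hlt)
      rw [Nat.succ_eq_add_one, Nat.mul_add] at this
      omega
  refine ⟨hh, hπ.injOn hp ha ?_⟩
  rw [hh] at key
  omega

end CopyData

lemma exists_pmin {π : ℕ → ℕ} {σ : ℕ × ℕ} (h : σ.1 ≤ σ.2) :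
    ∃ c ∈ Set.Icc σ.1 σ.2, π c = pmin π σ :=
  Nat.sInf_mem (s := π '' Set.Icc σ.1 σ.2) ⟨_, σ.1, ⟨le_rfl, h⟩, rfl⟩

lemma exists_pmax {π : ℕ → ℕ} {σ : ℕ × ℕ} (h : σ.1 ≤ σ.2) :
    ∃ c ∈ Set.Icc σ.1 σ.2, π c = pmax π σ :=
  Nat.sSup_mem (s := π '' Set.Icc σ.1 σ.2) ⟨_, σ.1, ⟨le_rfl, h⟩, rfl⟩
    ((Set.finite_Icc _ _).image π).bddAbove

lemma exists_prevMin {π : ℕ → ℕ} {E : List (ℕ × ℕ)} {j : ℕ} (hj : 1 ≤ j) :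
    ∃ i < j, prevMin π E j = pmin π (E.getD i (0, 0)) :=
  Nat.sInf_mem (s := {v | ∃ i < j, v = pmin π (E.getD i (0, 0))}) ⟨_, 0, hj, rfl⟩

lemma exists_prevMax {π : ℕ → ℕ} {E : List (ℕ × ℕ)} {j : ℕ} (hj : 1 ≤ j) :
    ∃ i < j, prevMax π E j = pmax π (E.getD i (0, 0)) := by
  refine Nat.sSup_mem (s := {v | ∃ i < j, v = pmax π (E.getD i (0, 0))}) ⟨_, 0, hj, rfl⟩ ?_
  have : {v | ∃ i < j, v = pmax π (E.getD i (0, 0))} =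
      (fun i => pmax π (E.getD i (0, 0))) '' Set.Iio j := by
    ext v
    simp [eq_comm]
  rw [this]
  exact ((Set.finite_Iio _).image _).bddAbove

lemma getD_mem {E : List (ℕ × ℕ)} {j : ℕ} (hj : j < E.length) : E.getD j (0, 0) ∈ E := by
  rw [List.getD_eq_getElem _ _ hj]
  exact List.getElem_mem hj

/-- The entries of a `π`-copy all have the same height. -/
lemma CopyData.height_const {k u : ℕ} {π r : ℕ → ℕ} {s : ℕ → Bool} {B m p : ℕ → ℕ}
    {E : List (ℕ × ℕ)} (D : CopyData k u π r s B m p) (hr : StrictMonoOn r (Set.Icc 0 u))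
    (hr0 : r 0 = 0) (hru : r u = k) (hπ : Set.BijOn π (Set.Icc 1 k) (Set.Icc 1 k))
    (hE : IsEntangling k π E)
    (hparts : ∀ σ ∈ E, ∃ i, 1 ≤ i ∧ i ≤ u ∧ r (i - 1) + 1 = σ.1 ∧ r i = σ.2)
    {i₁ : ℕ} (h1 : 1 ≤ i₁) (h1u : i₁ ≤ u) (hfst : r (i₁ - 1) + 1 = (E.getD 0 (0, 0)).1)
    (hsnd : r i₁ = (E.getD 0 (0, 0)).2) (hg : GoodSigns u π r s i₁) :
    ∃ h, ∀ a ∈ Set.Icc 1 k, height k s (B a) (m a) = h := by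
  have hpos : 0 < E.length := List.length_pos_iff.2 hE.nonempty
  have hend : ∀ i, i₁ ≤ i → i ≤ u → B (r i) ≤ i := fun i hi hiu =>
    D.block_end_le hr hru hπ hg h1 (u - i) i hi (by omega)
  have hstart : ∀ i, 1 ≤ i → i ≤ i₁ → i ≤ B (r (i - 1) + 1) := by
    intro i hi hi1
    have := D.le_block_start hr hr0 hru hπ hg h1u (i - 1) (by omega)
    omega
  have hidx : ∀ i j, i ≤ u → j ≤ u → r i < r j → i < j := fun i j hi hj h =>
    (hr.lt_iff_lt ⟨by omega, hi⟩ ⟨by omega, hj⟩).1 h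
  have hmem : ∀ σ ∈ E, ∀ a ∈ Set.Icc σ.1 σ.2, a ∈ Set.Icc 1 k := by
    intro σ hσ a ha
    have := hE.valid σ hσ
    exact ⟨by have := ha.1; omega, by have := ha.2; omega⟩
  have hblock : ∀ a ∈ Set.Icc 1 k, p a = a → ∀ i, 1 ≤ i → i ≤ u →
      a ∈ Set.Icc (r (i - 1) + 1) (r i) → B a = i := by
    intro a ha hpa i hi hiu hai
    have hb := D.base a ha
    have hB := D.block a ha
    rw [hpa] at hb
    simp only [Set.mem_Icc] at hb hai
    have h2 := hidx (B a - 1) i (by omega) hiu (by omega)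
    have h3 := hidx (i - 1) (B a) (by omega) hB.2 (by omega)
    omega
  refine ⟨height k s i₁ (m (r (i₁ - 1) + 1)), ?_⟩
  set h := height k s i₁ (m (r (i₁ - 1) + 1)) with hh
  have main : ∀ j < E.length, ∀ a ∈ Set.Icc (E.getD j (0, 0)).1 (E.getD j (0, 0)).2,
      height k s (B a) (m a) = h ∧ p a = a := by
    intro j
    induction j using Nat.strong_induction_on with
    | _ j ih =>
    intro hj
    have hjE := getD_mem hj
    obtain ⟨i, hi, hiu, hi1, hi2⟩ := hparts _ hjE
    have hlen := hE.valid _ hjE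
    rcases Nat.eq_zero_or_pos j with rfl | hj1
    · intro a ha
      rw [← hfst, ← hsnd] at ha
      obtain ⟨q1, q2, q3⟩ := D.part_aligned hr hru hπ hg h1 h1u (hstart i₁ h1 le_rfl)
        (hend i₁ le_rfl h1u) a ha
      rw [q1, q2]
      exact ⟨rfl, q3⟩
    · obtain ⟨c, hc, hcA, hcv⟩ : ∃ c ∈ Set.Icc 1 k,
          (height k s (B c) (m c) = h ∧ p c = c) ∧ π c = prevMin π E j := by
        obtain ⟨l, hl, hlv⟩ := exists_prevMin (π := π) (E := E) hj1
        have hlE := getD_mem (hl.trans hj)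
        obtain ⟨c, hc, hcv⟩ := exists_pmin (π := π) (hE.valid _ hlE).2.1.le
        exact ⟨c, hmem _ hlE c hc, ih l hl (hl.trans hj) c hc, by rw [hcv, hlv]⟩
      obtain ⟨d, hd, hdA, hdv⟩ : ∃ d ∈ Set.Icc 1 k,
          (height k s (B d) (m d) = h ∧ p d = d) ∧ π d = prevMax π E j := by
        obtain ⟨l, hl, hlv⟩ := exists_prevMax (π := π) (E := E) hj1
        have hlE := getD_mem (hl.trans hj)
        obtain ⟨c, hc, hcv⟩ := exists_pmax (π := π) (hE.valid _ hlE).2.1.le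
        exact ⟨c, hmem _ hlE c hc, ih l hl (hl.trans hj) c hc, by rw [hcv, hlv]⟩
      have hkey : ∀ a ∈ Set.Icc 1 k, prevMin π E j < π a → π a < prevMax π E j →
          height k s (B a) (m a) = h ∧ p a = a := fun a ha h2 h3 =>
        D.aligned_between hr hru hπ hc hd ha (by omega) (by omega) hcA hdA
      obtain ⟨y, hyσ, hyA, hX, hY⟩ : ∃ y ∈ Set.Icc (r (i - 1) + 1) (r i),
          (height k s (B y) (m y) = h ∧ p y = y) ∧ i ≤ B (r (i - 1) + 1) ∧ B (r i) ≤ i := by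
        rcases hE.nest j hj1 hj with ⟨q1, q2, q3⟩ | ⟨q1, q2, q3⟩
        · have hyk : (E.getD j (0, 0)).1 ∈ Set.Icc 1 k := ⟨hlen.1, by omega⟩
          have hA := hkey _ hyk q2 q3
          rw [← hi1] at hA hyk
          have hyi : r (i - 1) + 1 ∈ Set.Icc (r (i - 1) + 1) (r i) := ⟨le_rfl, by omega⟩
          refine ⟨_, hyi, hA, (hblock _ hyk hA.2 i hi hiu hyi).ge, hend i ?_ hiu⟩
          exact (hidx i₁ i h1u hiu (by omega)).le
        · have hyk : (E.getD j (0, 0)).2 ∈ Set.Icc 1 k := ⟨by omega, hlen.2.2⟩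
          have hA := hkey _ hyk q2 q3
          rw [← hi2] at hA hyk
          have hyi : r i ∈ Set.Icc (r (i - 1) + 1) (r i) := ⟨by omega, le_rfl⟩
          refine ⟨_, hyi, hA, hstart i hi ?_, (hblock _ hyk hA.2 i hi hiu hyi).le⟩
          have := boundary_lt hr h1 h1u
          exact (hidx i i₁ hiu h1u (by omega)).le
      have hP := D.part_aligned hr hru hπ hg hi hiu hX hY
      intro a ha
      rw [← hi1, ← hi2] at ha
      obtain ⟨q1, q2, q3⟩ := hP a ha
      obtain ⟨w1, w2, -⟩ := hP y hyσ
      rw [q1, q2, ← w2, ← hyA.1, w1]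
      exact ⟨rfl, q3⟩
  have mainE : ∀ σ ∈ E, ∀ a ∈ Set.Icc σ.1 σ.2, height k s (B a) (m a) = h ∧ p a = a := by
    intro σ hσ
    obtain ⟨j, hj, rfl⟩ := List.getElem_of_mem hσ
    have := main j hj
    rwa [List.getD_eq_getElem _ _ hj] at this
  intro a ha
  have hv := hπ.mapsTo ha
  obtain ⟨σ, hσ, hlo, hhi⟩ := hE.cover (π a) hv.1 hv.2
  obtain ⟨c, hc, hcv⟩ := exists_pmin (π := π) (hE.valid _ hσ).2.1.le
  obtain ⟨d, hd, hdv⟩ := exists_pmax (π := π) (hE.valid _ hσ).2.1.le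
  exact (D.aligned_between hr hru hπ (hmem σ hσ c hc) (hmem σ hσ d hd) ha (by omega) (by omega)
    (mainE σ hσ c hc) (mainE σ hσ d hd)).1

/-- The coordinates of a position of `f_P`. -/
lemma exists_coordinates {k u n : ℕ} {r : ℕ → ℕ} (hr0 : r 0 = 0) (hru : r u = k)
    (hn : n ∈ Set.Icc 1 (k * k)) :
    ∃ i m j, 1 ≤ i ∧ i ≤ u ∧ m < k ∧ 1 ≤ j ∧ j ≤ r i - r (i - 1) ∧
      n = r (i - 1) * k + m * (r i - r (i - 1)) + j := by
  classical
  have hex : ∃ i, n ≤ r i * k := ⟨u, by rw [hru]; exact hn.2⟩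
  have hspec := Nat.find_spec hex
  have hmin := fun l => Nat.find_min (m := l) hex
  have hle : Nat.find hex ≤ u := Nat.find_min' hex (by rw [hru]; exact hn.2)
  set i := Nat.find hex
  have hi : 1 ≤ i := by
    by_contra h0
    have : i = 0 := by omega
    rw [this, hr0] at hspec
    have := hn.1
    omega
  have hlt : r (i - 1) * k < n := by
    have := hmin (i - 1) (by omega)
    omega
  have hrr : r (i - 1) < r i := lt_of_mul_lt_mul_right (hlt.trans_le hspec) (Nat.zero_le k)
  obtain ⟨L, hL⟩ := Nat.exists_eq_add_of_lt hrr
  obtain ⟨q, hq⟩ := Nat.exists_eq_add_of_lt hlt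
  have hlen : r i - r (i - 1) = L + 1 := by omega
  have hqk : q < k * (L + 1) := by
    rw [hL] at hspec
    nlinarith
  refine ⟨i, q / (L + 1), q % (L + 1) + 1, hi, hle, ?_, by omega, ?_, ?_⟩
  · exact Nat.div_lt_of_lt_mul (by rwa [mul_comm])
  · rw [hlen]
    exact Nat.mod_lt _ (by omega)
  · rw [hlen, hq]
    have := Nat.div_add_mod' q (L + 1)
    omega

/-- A `π`-copy in `f_P` has coordinates. -/
lemma exists_copyData {k u : ℕ} {π r : ℕ → ℕ} {s : ℕ → Bool} {f : ℕ → ℝ} {idx : ℕ → ℕ}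
    (hk : 1 ≤ k) (hr : StrictMonoOn r (Set.Icc 0 u)) (hr0 : r 0 = 0) (hru : r u = k)
    (hf : FPEq k u π r s f) (hidx : IsPatternAt k π f idx) :
    ∃ B m p, CopyData k u π r s B m p ∧ ∀ a ∈ Set.Icc 1 k,
      f (idx a) = (height k s (B a) (m a) : ℝ) + (π (p a) : ℝ) / (2 * k) := by
  obtain ⟨hmono, hran, hord⟩ := hidx
  choose! B m j hB1 hBu hm hj1 hj2 hpos using
    fun a (ha : a ∈ Set.Icc 1 k) => exists_coordinates hr0 hru (hran a ha)
  have hval : ∀ a ∈ Set.Icc 1 k, f (idx a) =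
      (height k s (B a) (m a) : ℝ) + (π (r (B a - 1) + j a) : ℝ) / (2 * k) := by
    intro a ha
    have h := hf (B a) (hB1 a ha) (hBu a ha) (m a) (hm a ha) (j a) (hj1 a ha) (hj2 a ha)
    rw [← hpos a ha] at h
    have hmk := hm a ha
    rw [h, height]
    split_ifs
    · rfl
    · rw [Nat.sub_sub, Nat.cast_sub (by omega)]
      push_cast
      ring
  refine ⟨B, m, fun a => r (B a - 1) + j a, ⟨fun a ha => ⟨hB1 a ha, hBu a ha⟩, hm, ?_, ?_, ?_⟩,
    hval⟩
  · intro a ha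
    have h1 := hj1 a ha
    have h2 := hj2 a ha
    exact ⟨by omega, by omega⟩
  · intro a ha b hb hab
    have h := hmono ha hb hab
    have upper : ∀ c ∈ Set.Icc 1 k, idx c ≤ r (B c) * k := by
      intro c hc
      have h1 := boundary_lt hr (hB1 c hc) (hBu c hc)
      obtain ⟨L, hL⟩ := Nat.exists_eq_add_of_lt h1
      have h2 := hj2 c hc
      have h3 := hm c hc
      rw [hpos c hc]
      have hlen : r (B c) - r (B c - 1) = L + 1 := by omega
      rw [hlen] at h2 ⊢
      rw [hL]
      nlinarith
    rcases lt_trichotomy (B a) (B b) with hlt | heq | hlt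
    · exact Or.inl hlt
    · refine Or.inr ⟨heq, ?_⟩
      have pa := hpos a ha
      have pb := hpos b hb
      have ja := hj2 a ha
      have jb := hj2 b hb
      have ja1 := hj1 a ha
      rw [heq] at pa ja
      rcases lt_trichotomy (m a) (m b) with hlt | hme | hlt
      · exact Or.inl hlt
      · refine Or.inr ⟨hme, ?_⟩
        rw [hme] at pa
        rw [heq]
        omega
      · exfalso
        have := Nat.mul_le_mul_right (r (B b) - r (B b - 1)) (Nat.succ_le_of_lt hlt)
        rw [Nat.succ_mul] at this
        omega
    · exfalso
      have h1 : r (B b) ≤ r (B a - 1) := hr.monotoneOn ⟨by omega, hBu b hb⟩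
        ⟨by omega, by have := hBu a ha; omega⟩ (by omega)
      have h2 := Nat.mul_le_mul_right k h1
      have h3 := upper b hb
      have h4 := hpos a ha
      have := hj1 a ha
      omega
  · intro a ha b hb
    rw [← hord a ha b hb, hval a ha, hval b hb]
    have hk' : (0 : ℝ) < 2 * k := by positivity
    rw [← mul_lt_mul_iff_right₀ hk', mul_add, mul_add, mul_div_cancel₀ _ hk'.ne',
      mul_div_cancel₀ _ hk'.ne']
    exact_mod_cast Iff.rfl

/-- A signed partition with good signs containing the parts of an entangling is unique. -/
lemma uniqueSP_of_goodSigns {k u : ℕ} {π r : ℕ → ℕ} {s : ℕ → Bool} {E : List (ℕ × ℕ)}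
    (hk : 1 ≤ k) (hπ : Set.BijOn π (Set.Icc 1 k) (Set.Icc 1 k)) (hE : IsEntangling k π E)
    (hsp : IsSignedPartition k u π r s)
    (hparts : ∀ σ ∈ E, ∃ i, 1 ≤ i ∧ i ≤ u ∧ r (i - 1) + 1 = σ.1 ∧ r i = σ.2)
    {i₁ : ℕ} (h1 : 1 ≤ i₁) (h1u : i₁ ≤ u) (hfst : r (i₁ - 1) + 1 = (E.getD 0 (0, 0)).1)
    (hsnd : r i₁ = (E.getD 0 (0, 0)).2) (hg : GoodSigns u π r s i₁) :
    UniqueSP k u π r s := by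
  refine ⟨hsp, fun f hf idx hidx => ?_⟩
  obtain ⟨hr0, hru, hr, -⟩ := hsp
  obtain ⟨B, m, p, D, hval⟩ := exists_copyData hk hr hr0 hru hf hidx
  obtain ⟨h, hh⟩ := D.height_const hr hr0 hru hπ hE hparts h1 h1u hfst hsnd hg
  refine ⟨h, ?_, fun a ha => ?_⟩
  · have h2 := hh 1 ⟨le_rfl, hk⟩
    have h3 := D.copy 1 ⟨le_rfl, hk⟩
    rw [← h2, height]
    split_ifs <;> omega
  · rw [hval a ha, hh a ha]
    have hp := hπ.mapsTo (D.base_mem hr hru ha)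
    have hk' : (0 : ℝ) < 2 * k := by positivity
    have hp1 : (1 : ℝ) ≤ π (p a) := by exact_mod_cast hp.1
    have hp2 : (π (p a) : ℝ) ≤ k := by exact_mod_cast hp.2
    constructor
    · have : 0 < (π (p a) : ℝ) / (2 * k) := by positivity
      linarith
    · have : (π (p a) : ℝ) / (2 * k) < 1 := by
        rw [div_lt_one hk']
        linarith
      linarith

/-- The positions that are `0` or the last position of a part of `Λ(E)`, together with all
positions beyond the last one. -/
def IsEnd (E : List (ℕ × ℕ)) (y : ℕ) : Prop := ∀ σ ∈ E, ¬ (σ.1 ≤ y ∧ y < σ.2)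

lemma card_not_isEnd {k : ℕ} (E : List (ℕ × ℕ)) (hE : ∀ σ ∈ E, σ.2 ≤ k)
    (hd : E.Pairwise fun σ τ => Disjoint (Set.Icc σ.1 σ.2) (Set.Icc τ.1 τ.2)) :
    (Set.Iio k ∩ {y | ¬ IsEnd E y}).ncard = (E.map fun σ => σ.2 - σ.1).sum := by
  induction E with
  | nil => simp [IsEnd]
  | cons σ E ih =>
    rw [List.pairwise_cons] at hd
    have hunion : Set.Iio k ∩ {y | ¬ IsEnd (σ :: E) y} =
        Set.Ico σ.1 σ.2 ∪ Set.Iio k ∩ {y | ¬ IsEnd E y} := by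
      ext y
      have := hE σ List.mem_cons_self
      simp only [IsEnd, List.mem_cons, forall_eq_or_imp, Set.mem_inter_iff, Set.mem_Iio,
        Set.mem_ofPred_eq, Set.mem_union, Set.mem_Ico]
      constructor
      · tauto
      · rintro (h | h)
        · exact ⟨by omega, fun q => q.1 h⟩
        · exact ⟨h.1, fun q => h.2 q.2⟩
    rw [hunion, Set.ncard_union_eq _ (Set.finite_Ico _ _) ((Set.finite_Iio k).inter_of_left _),
      ih (fun τ hτ => hE τ (List.mem_cons_of_mem _ hτ)) hd.2, List.map_cons, List.sum_cons,
      Set.ncard_eq_toFinset_card']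
    · simp
    · rw [Set.disjoint_left]
      rintro y hy ⟨-, hy'⟩
      simp only [IsEnd, Set.mem_ofPred_eq, not_forall, not_not] at hy'
      obtain ⟨τ, hτ, h1, h2⟩ := hy'
      exact Set.disjoint_left.1 (hd.1 τ hτ) ⟨hy.1, hy.2.le⟩ ⟨h1, h2.le⟩

/-- The number of parts of `Λ(E)` is `d(E)`. -/
lemma count_isEnd {k : ℕ} {E : List (ℕ × ℕ)} [DecidablePred (IsEnd E)]
    (hE : ∀ σ ∈ E, σ.2 ≤ k)
    (hd : E.Pairwise fun σ τ => Disjoint (Set.Icc σ.1 σ.2) (Set.Icc τ.1 τ.2)) :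
    Nat.count (IsEnd E) k = dval k E := by
  have h1 := card_not_isEnd E hE hd
  have h2 : ((Finset.range k).filter fun y => IsEnd E y).card +
      ((Finset.range k).filter fun y => ¬ IsEnd E y).card = (Finset.range k).card :=
    Finset.card_filter_add_card_filter_not _
  have h3 : Set.Iio k ∩ {y | ¬ IsEnd E y} =
      ((Finset.range k).filter fun y => ¬ IsEnd E y : Finset ℕ) := by
    ext y
    simp
  rw [h3, Set.ncard_coe_finset] at h1
  rw [Finset.card_range] at h2
  rw [Nat.count_eq_card_filter_range, dval]
  omega

/-- The boundaries of the partition `Λ(E)`. -/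
lemma exists_boundaries {k : ℕ} {π : ℕ → ℕ} {E : List (ℕ × ℕ)} (hE : IsEntangling k π E) :
    ∃ r : ℕ → ℕ, r 0 = 0 ∧ r (dval k E) = k ∧ StrictMono r ∧
      (∀ σ ∈ E, ∃ i, 1 ≤ i ∧ i ≤ dval k E ∧ r (i - 1) + 1 = σ.1 ∧ r i = σ.2) ∧
      ∀ i, 1 ≤ i → r (i - 1) + 1 < r i → ∃ σ ∈ E, r (i - 1) + 1 = σ.1 ∧ r i = σ.2 := by
  classical
  have hv := hE.valid
  have hinf : (Set.ofPred (IsEnd E)).Infinite := by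
    refine (Set.Ici_infinite k).mono fun y hy σ hσ h => ?_
    have := (hv σ hσ).2.2
    have : k ≤ y := hy
    omega
  have hr : StrictMono (Nat.nth (IsEnd E)) := Nat.nth_strictMono hinf
  have hend : ∀ n, IsEnd E (Nat.nth (IsEnd E) n) := Nat.nth_mem_of_infinite hinf
  have hk : Nat.nth (IsEnd E) (dval k E) = k := by
    rw [← count_isEnd (fun σ hσ => (hv σ hσ).2.2) hE.disj]
    refine Nat.nth_count fun σ hσ h => ?_
    have := (hv σ hσ).2.2
    omega
  have hdisj : ∀ σ ∈ E, ∀ τ ∈ E, σ ≠ τ → Disjoint (Set.Icc σ.1 σ.2) (Set.Icc τ.1 τ.2) := by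
    have : Std.Symm fun σ τ : ℕ × ℕ => Disjoint (Set.Icc σ.1 σ.2) (Set.Icc τ.1 τ.2) :=
      ⟨fun _ _ h => h.symm⟩
    exact fun σ hσ τ hτ hne => hE.disj.forall hσ hτ hne
  have hparts : ∀ σ ∈ E, ∃ i, 1 ≤ i ∧ i ≤ dval k E ∧ Nat.nth (IsEnd E) (i - 1) + 1 = σ.1 ∧
      Nat.nth (IsEnd E) i = σ.2 := by
    intro σ hσ
    have hσv := hv σ hσ
    have e1 : IsEnd E (σ.1 - 1) := by
      rintro τ hτ ⟨h1, h2⟩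
      have hne : σ ≠ τ := by
        rintro rfl
        omega
      exact Set.disjoint_left.1 (hdisj σ hσ τ hτ hne)
        (show σ.1 ∈ _ from ⟨le_rfl, hσv.2.1.le⟩) ⟨by omega, by omega⟩
    have e2 : IsEnd E σ.2 := by
      rintro τ hτ ⟨h1, h2⟩
      have hne : σ ≠ τ := by
        rintro rfl
        omega
      exact Set.disjoint_left.1 (hdisj σ hσ τ hτ hne)
        (show σ.2 ∈ _ from ⟨hσv.2.1.le, le_rfl⟩) ⟨h1, h2.le⟩
    have c1 := Nat.nth_count e1
    have c2 := Nat.nth_count e2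
    set c := Nat.count (IsEnd E) (σ.1 - 1)
    set d := Nat.count (IsEnd E) σ.2
    have hcd : c < d := hr.lt_iff_lt.1 (by omega)
    have hdc : d ≤ c + 1 := by
      by_contra hlt
      have h1 := hr (show c < c + 1 by omega)
      have h2 := hr (show c + 1 < d by omega)
      exact hend (c + 1) σ hσ ⟨by omega, by omega⟩
    have hdu : d ≤ dval k E := hr.le_iff_le.1 (by omega)
    refine ⟨d, by omega, hdu, ?_, c2⟩
    rw [show d - 1 = c by omega]
    omega
  refine ⟨Nat.nth (IsEnd E), Nat.nth_zero_of_zero ?_, hk, hr, hparts, fun i hi hlt => ?_⟩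
  · rintro σ hσ ⟨h, -⟩
    have := (hv σ hσ).1
    omega
  · have hnot : ¬ IsEnd E (Nat.nth (IsEnd E) (i - 1) + 1) := by
      intro h
      have := Nat.le_nth_of_lt_nth_succ (k := i - 1) (by rwa [Nat.sub_add_cancel hi]) h
      omega
    simp only [IsEnd, not_forall, not_not] at hnot
    obtain ⟨σ, hσ, h1, h2⟩ := hnot
    obtain ⟨i', hi1, -, hx, hy⟩ := hparts σ hσ
    have q1 : i' - 1 ≤ i - 1 := hr.le_iff_le.1 (by omega)
    have q2 : i - 1 < i' := hr.lt_iff_lt.1 (by omega)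
    obtain rfl : i = i' := by omega
    exact ⟨σ, hσ, hx, hy⟩

lemma exists_extremes (π : ℕ → ℕ) {x y : ℕ} (h : x ≤ y) :
    ∃ m ∈ Set.Icc x y, ∃ M ∈ Set.Icc x y, ∀ c ∈ Set.Icc x y, π m ≤ π c ∧ π c ≤ π M := by
  obtain ⟨m, hm, hm'⟩ := Set.exists_min_image (Set.Icc x y) π (Set.finite_Icc _ _) ⟨x, le_rfl, h⟩
  obtain ⟨M, hM, hM'⟩ := Set.exists_max_image (Set.Icc x y) π (Set.finite_Icc _ _) ⟨x, le_rfl, h⟩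
  exact ⟨m, hm, M, hM, fun c hc => ⟨hm' c hc, hM' c hc⟩⟩

open Classical in
/-- The signs making `Λ(E)` unique: a part with several entries gets the sign it must have, a
singleton one that keeps it from being shadowed with respect to part `i₁`. -/
noncomputable def entSign (π r : ℕ → ℕ) (i₁ i : ℕ) : Bool :=
  decide (if r (i - 1) + 1 < r i then
    ∃ m ∈ Set.Icc (r (i - 1) + 1) (r i), ∃ M ∈ Set.Icc (r (i - 1) + 1) (r i),
      (∀ c ∈ Set.Icc (r (i - 1) + 1) (r i), π m ≤ π c ∧ π c ≤ π M) ∧ M < m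
  else if i₁ < i then π (r i) ≤ π (r (i - 1)) else π (r i + 1) ≤ π (r i))

lemma entSign_eq_false_iff {k u i i₁ : ℕ} {π r : ℕ → ℕ} (hπ : Set.InjOn π (Set.Icc 1 k))
    (hr : StrictMono r) (hru : r u = k) (hiu : i ≤ u) (hlen : r (i - 1) + 1 < r i)
    {m M : ℕ} (hm : m ∈ Set.Icc (r (i - 1) + 1) (r i)) (hM : M ∈ Set.Icc (r (i - 1) + 1) (r i))
    (hc : ∀ c ∈ Set.Icc (r (i - 1) + 1) (r i), π m ≤ π c ∧ π c ≤ π M) :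
    entSign π r i₁ i = false ↔ m < M := by
  have hik : r i ≤ k := hru ▸ hr.monotone hiu
  have hsub : ∀ c ∈ Set.Icc (r (i - 1) + 1) (r i), c ∈ Set.Icc 1 k := fun c h =>
    ⟨by have := h.1; omega, h.2.trans hik⟩
  have hne : m ≠ M := by
    rintro rfl
    have h1 := hc (r (i - 1) + 1) ⟨le_rfl, hlen.le⟩
    have h2 := hc (r i) ⟨hlen.le, le_rfl⟩
    have := hπ (hsub _ ⟨le_rfl, hlen.le⟩) (hsub _ ⟨hlen.le, le_rfl⟩) (by omega)
    omega
  rw [entSign, decide_eq_false_iff_not, if_pos hlen]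
  constructor
  · intro h
    by_contra hlt
    exact h ⟨m, hm, M, hM, hc, by omega⟩
  · rintro h ⟨m', hm', M', hM', hc', hlt⟩
    have e1 := hπ (hsub _ hm) (hsub _ hm') (le_antisymm (hc _ hm').1 (hc' _ hm).1)
    have e2 := hπ (hsub _ hM) (hsub _ hM') (le_antisymm (hc' _ hM).2 (hc _ hM').2)
    omega

lemma goodSigns_entSign {k u i₁ : ℕ} {π r : ℕ → ℕ} {E : List (ℕ × ℕ)}
    (hπ : Set.InjOn π (Set.Icc 1 k)) (hE : IsEntangling k π E) (hr : StrictMono r)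
    (hru : r u = k) (h1 : 1 ≤ i₁) (hfst : r (i₁ - 1) + 1 = (E.getD 0 (0, 0)).1)
    (hsnd : r i₁ = (E.getD 0 (0, 0)).2)
    (hlong : ∀ i, 1 ≤ i → r (i - 1) + 1 < r i → ∃ σ ∈ E, r (i - 1) + 1 = σ.1 ∧ r i = σ.2) :
    GoodSigns u π r (entSign π r i₁) i₁ := by
  intro i hi hiu
  have hlt : r (i - 1) < r i := hr (by omega)
  rcases (Nat.succ_le_of_lt hlt).eq_or_lt with heq | hlen
  · rw [Nat.succ_eq_add_one] at heq
    refine ⟨r i, r i, heq.le, le_rfl, le_rfl, ?_, ?_, ?_⟩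
    · intro c hc
      obtain rfl : c = r i := le_antisymm hc.2 (by have := hc.1; omega)
      simp [SignLe]
    · intro h
      simp only [SignLe, entSign, heq, lt_irrefl, if_false, h, if_true, decide_eq_true_eq,
        decide_eq_false_iff_not]
      omega
    · intro h
      simp only [SignLe, entSign, heq, lt_irrefl, if_false, h.not_gt, decide_eq_true_eq,
        decide_eq_false_iff_not]
      omega
  · rw [Nat.succ_eq_add_one] at hlen
    obtain ⟨m, hm, M, hM, hc⟩ := exists_extremes π hlen.le
    have hsign := entSign_eq_false_iff (i₁ := i₁) hπ hr hru hiu hlen hm hM hc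
    obtain ⟨σ, hσ, hx, hy⟩ := hlong i hi hlen
    have hshadow : i ≠ i₁ → ¬ Shadowed π (E.getD 0 (0, 0)) σ := by
      intro hne
      obtain ⟨j, hj, rfl⟩ := List.getElem_of_mem hσ
      have := hE.notShadowed j ?_ hj
      · rwa [List.getD_eq_getElem _ _ hj] at this
      · by_contra h0
        obtain rfl : j = 0 := by omega
        rw [List.getD_eq_getElem _ _ hj] at hsnd
        exact hne (hr.injective (by omega))
    have hright : i₁ < i → (E.getD 0 (0, 0)).2 < σ.1 := by
      intro h
      have : r i₁ ≤ r (i - 1) := hr.monotone (by omega)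
      omega
    have hleft : i < i₁ → σ.2 < (E.getD 0 (0, 0)).1 := by
      intro h
      have : r i ≤ r (i₁ - 1) := hr.monotone (by omega)
      omega
    have hsub : σ.1 - 1 = r (i - 1) := by omega
    rw [hx, hy] at hm hM hc
    have hns : ∀ h : i ≠ i₁, _ := fun h hh => hshadow h ⟨m, M, hm, hM, hc, hh⟩
    rw [hsub, ← hy] at hns
    rw [← hx, ← hy] at hm hM hc
    rcases hs : entSign π r i₁ i with _ | _
    · have hmM := hsign.1 hs
      refine ⟨m, M, hm.1, hmM.le, hM.2, fun c h => ⟨?_, ?_⟩, fun h => ?_, fun h => ?_⟩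
      · simpa [SignLe] using (hc c h).1
      · simpa [SignLe] using (hc c h).2
      · have h2 := hright h
        have h3 := hns h.ne'
        simp only [SignLe, reduceCtorEq, false_imp_iff, true_and, forall_const]
        by_contra h4
        exact h3 (Or.inl ⟨by omega, hmM, by omega⟩)
      · have h2 := hleft h
        have h3 := hns h.ne
        simp only [SignLe, reduceCtorEq, false_imp_iff, true_and, forall_const]
        by_contra h4
        exact h3 (Or.inr (Or.inr (Or.inl ⟨by omega, hmM, by omega⟩)))
    · have hMm : ¬ m < M := fun h => by simp [hsign.2 h] at hs
      have hne : M ≠ m := by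
        rintro rfl
        have e1 := hc (r (i - 1) + 1) ⟨le_rfl, hlen.le⟩
        have e2 := hc (r i) ⟨hlen.le, le_rfl⟩
        have hik : r i ≤ k := hru ▸ hr.monotone hiu
        have := hπ (x₁ := r (i - 1) + 1) (x₂ := r i) ⟨by omega, by omega⟩ ⟨by omega, hik⟩
          (by omega)
        omega
      refine ⟨M, m, hM.1, by omega, hm.2, fun c h => ⟨?_, ?_⟩, fun h => ?_, fun h => ?_⟩
      · simpa [SignLe] using (hc c h).2
      · simpa [SignLe] using (hc c h).1
      · have h2 := hright h
        have h3 := hns h.ne'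
        simp only [SignLe, reduceCtorEq, false_imp_iff, and_true, forall_const]
        by_contra h4
        exact h3 (Or.inr (Or.inl ⟨by omega, by omega, by omega⟩))
      · have h2 := hleft h
        have h3 := hns h.ne
        simp only [SignLe, reduceCtorEq, false_imp_iff, and_true, forall_const]
        by_contra h4
        exact h3 (Or.inr (Or.inr (Or.inr ⟨by omega, by omega, by omega⟩)))

/-- Every entangling gives a unique signed partition whose underlying partition is `Λ(E)`. -/
lemma IsEntangling.exists_uniqueSP {k : ℕ} {π : ℕ → ℕ} {E : List (ℕ × ℕ)} (hk : 1 ≤ k)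
    (hπ : Set.BijOn π (Set.Icc 1 k) (Set.Icc 1 k)) (hE : IsEntangling k π E) :
    ∃ r : ℕ → ℕ, ∃ s : ℕ → Bool, UniqueSP k (dval k E) π r s ∧
      ∀ σ ∈ E, ∃ i, 1 ≤ i ∧ i ≤ dval k E ∧ r (i - 1) + 1 = σ.1 ∧ r i = σ.2 := by
  obtain ⟨r, hr0, hru, hr, hparts, hlong⟩ := exists_boundaries hE
  obtain ⟨i₁, h1, h1u, hfst, hsnd⟩ :=
    hparts _ (getD_mem (List.length_pos_iff.2 hE.nonempty))
  refine ⟨r, entSign π r i₁, ?_, hparts⟩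
  refine uniqueSP_of_goodSigns hk hπ hE ⟨hr0, hru, hr.strictMonoOn _, ?_⟩ hparts h1 h1u hfst hsnd
    (goodSigns_entSign hπ.injOn hE hr hru h1 hfst hsnd hlong)
  exact fun i _ hiu hlen a ha b hb hc =>
    entSign_eq_false_iff hπ.injOn hr hru hiu (by omega) ha hb hc

lemma UniqueSP.size_le {k u : ℕ} {π r : ℕ → ℕ} {s : ℕ → Bool} (h : UniqueSP k u π r s) :
    u ≤ k := by
  obtain ⟨-, hru, hr, -⟩ := h.1
  have : ∀ i, i ≤ u → i ≤ r i := by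
    intro i
    induction i with
    | zero => simp
    | succ i ih =>
      intro hi
      have h1 := ih (by omega)
      have h2 : r i < r (i + 1) := hr ⟨by omega, by omega⟩ ⟨by omega, hi⟩ (by omega)
      omega
  exact hru ▸ this u le_rfl

/-- For every entangling `E` of `π` there is a sign vector turning the partition `Λ(E)`
(whose parts are the elements of `E` and singletons elsewhere, `d(E)` parts in total) into a
unique signed partition; consequently `d(π) ≤ u(π)`. -/
theorem stmt_9 (k : ℕ) (hk : 1 ≤ k) (π : ℕ → ℕ)
    (hπ : Set.BijOn π (Set.Icc 1 k) (Set.Icc 1 k))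
    (E : List (ℕ × ℕ)) (hE : IsEntangling k π E) :
    (∃ r : ℕ → ℕ, ∃ s : ℕ → Bool, UniqueSP k (dval k E) π r s ∧
      ∀ σ ∈ E, ∃ i, 1 ≤ i ∧ i ≤ dval k E ∧ r (i - 1) + 1 = σ.1 ∧ r i = σ.2) ∧
    entNum k π ≤ uspn k π := by
  refine ⟨hE.exists_uniqueSP hk hπ, csSup_le ⟨_, E, hE, rfl⟩ ?_⟩
  rintro d ⟨E', hE', rfl⟩
  obtain ⟨r, s, hu, -⟩ := hE'.exists_uniqueSP hk hπ
  refine le_csSup ⟨k, ?_⟩ ⟨r, s, hu⟩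
  rintro u ⟨r, s, h⟩
  exact h.size_le
end

section
/- Let π be a permutation of length k chosen uniformly at random, with positions i, j such that π(i) = 1 and π(j) = k, and suppose i < j. Then with probability 1 − O(k^{−1/4}) all of the following hold: π(i+1) > k^{3/4}, π(j−1) < k − k^{3/4}, j − i ≥ k^{3/4}, and there exists an index x with i+1 < x < j−1 such that π(x) < k^{3/4} and π(x+1) > k − k^{3/4}. -/
open Finset in
theorem card_perm_map_eq {α : Type*} [Fintype α] [DecidableEq α] (l l' : List α)
    (hl : l.Nodup) (hl' : l'.Nodup) (hlen : l.length = l'.length) :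
    #{σ : Equiv.Perm α | l.map σ = l'} = (Fintype.card α - l.length).factorial := by
  obtain ⟨τ, hτ⟩ : ∃ τ : Equiv.Perm α, l.map τ = l' := by
    have hp : Function.Injective l.get := List.nodup_iff_injective_get.1 hl
    have hq : Function.Injective (fun x : Fin l.length => l'.get (x.cast hlen)) :=
      (List.nodup_iff_injective_get.1 hl').comp (Fin.cast_injective hlen)
    obtain ⟨τ, hτ⟩ := Equiv.Perm.exists_extending_pair _ _ hp hq
    refine ⟨τ, List.ext_getElem (by simpa using hlen) fun n h1 h2 => ?_⟩
    have := hτ ⟨n, by simpa using h1⟩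
    simpa using this
  have h1 : #{σ : Equiv.Perm α | l.map σ = l'}
      = #{σ : Equiv.Perm α | ∀ a, ¬ (a ∉ l) → σ a = a} := by
    refine Finset.card_bij' (fun σ _ => τ⁻¹ * σ) (fun σ _ => τ * σ) ?_ ?_ ?_ ?_
    · intro σ hσ
      simp only [mem_filter, mem_univ, true_and, not_not] at hσ ⊢
      rw [← hτ] at hσ
      intro a ha
      simp [List.map_inj_left.1 hσ a ha]
    · intro σ hσ
      simp only [mem_filter, mem_univ, true_and, not_not] at hσ ⊢
      rw [← hτ]
      exact List.map_inj_left.2 fun a ha => by simp [hσ a ha]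
    · simp
    · simp
  rw [h1, ← Fintype.card_subtype,
    ← Fintype.card_congr (Equiv.Perm.subtypeEquivSubtypePerm (fun a => a ∉ l)),
    Fintype.card_perm]
  congr 1
  rw [Fintype.card_subtype_compl (fun a => a ∈ l), ← List.toFinset_card_of_nodup hl]
  congr 1
  rw [← Fintype.card_coe]
  simp

open Finset in
theorem card_perm_hit {α : Type*} [Fintype α] [DecidableEq α] (i j u v a b : α) (S T : Finset α)
    (hp : [i, j, a, b].Nodup) (huv : u ≠ v) (hST : Disjoint S T)
    (hu : u ∉ S ∪ T) (hv : v ∉ S ∪ T) :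
    #{σ : Equiv.Perm α | (σ i = u ∧ σ j = v) ∧ σ a ∈ S ∧ σ b ∈ T}
      = #S * #T * (Fintype.card α - 4).factorial := by
  rw [card_eq_sum_card_fiberwise (f := fun σ => (σ a, σ b)) (t := S ×ˢ T)
    (by intro σ; simp), ← card_product, ← smul_eq_mul]
  refine sum_const_nat ?_
  rintro ⟨c, d⟩ hcd
  rw [mem_product] at hcd
  simp only [mem_union, not_or] at hu hv
  have hq : [u, v, c, d].Nodup := by
    have h1 : u ≠ c := fun h => hu.1 (h ▸ hcd.1)
    have h2 : u ≠ d := fun h => hu.2 (h ▸ hcd.2)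
    have h3 : v ≠ c := fun h => hv.1 (h ▸ hcd.1)
    have h4 : v ≠ d := fun h => hv.2 (h ▸ hcd.2)
    have h5 : c ≠ d := disjoint_iff_ne.1 hST _ hcd.1 _ hcd.2
    simp [*]
  rw [show 4 = [i, j, a, b].length from rfl, ← card_perm_map_eq _ _ hp hq rfl]
  congr 1
  ext σ
  simp only [mem_filter, mem_univ, true_and, List.map_cons, List.map_nil, List.cons.injEq,
    Prod.mk.injEq, and_true]
  constructor
  · tauto
  · rintro ⟨h1, h2, h3, h4⟩
    simp_all

open Finset in
theorem card_perm_hit_pair {α : Type*} [Fintype α] [DecidableEq α] (i j u v a b a' b' : α)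
    (S T : Finset α) (hp : [i, j, a, b, a', b'].Nodup) (huv : u ≠ v) (hST : Disjoint S T)
    (hu : u ∉ S ∪ T) (hv : v ∉ S ∪ T) :
    #{σ : Equiv.Perm α | (σ i = u ∧ σ j = v) ∧ (σ a ∈ S ∧ σ b ∈ T) ∧ σ a' ∈ S ∧ σ b' ∈ T}
      = #S.offDiag * #T.offDiag * (Fintype.card α - 6).factorial := by
  have haa' : a ≠ a' := by rintro rfl; simp at hp
  have hbb' : b ≠ b' := by rintro rfl; simp at hp
  rw [card_eq_sum_card_fiberwise (f := fun σ => ((σ a, σ a'), (σ b, σ b')))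
    (t := S.offDiag ×ˢ T.offDiag)
    (by intro σ; simp [haa', hbb']; tauto), ← card_product, ← smul_eq_mul]
  refine sum_const_nat ?_
  rintro ⟨⟨c, c'⟩, ⟨d, d'⟩⟩ hcd
  rw [mem_product, mem_offDiag, mem_offDiag] at hcd
  obtain ⟨⟨hc, hc', hcc⟩, hd, hd', hdd⟩ := hcd
  simp only at hc hc' hcc hd hd' hdd
  simp only [mem_union, not_or] at hu hv
  rw [disjoint_iff_ne] at hST
  have hq : [u, v, c, d, c', d'].Nodup := by
    have h1 : ∀ x ∈ S, u ≠ x := fun x hx h => hu.1 (h ▸ hx)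
    have h2 : ∀ x ∈ T, u ≠ x := fun x hx h => hu.2 (h ▸ hx)
    have h3 : ∀ x ∈ S, v ≠ x := fun x hx h => hv.1 (h ▸ hx)
    have h4 : ∀ x ∈ T, v ≠ x := fun x hx h => hv.2 (h ▸ hx)
    simp [huv, h1 c hc, h1 c' hc', h2 d hd, h2 d' hd', h3 c hc, h3 c' hc', h4 d hd, h4 d' hd',
      hcc, hdd, hST c hc d hd, hST c hc d' hd', hST c' hc' d' hd', (hST c' hc' d hd).symm]
  rw [show 6 = [i, j, a, b, a', b'].length from rfl, ← card_perm_map_eq _ _ hp hq rfl]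
  congr 1
  ext σ
  simp only [mem_filter, mem_univ, true_and, List.map_cons, List.map_nil, List.cons.injEq,
    Prod.mk.injEq, and_true]
  constructor
  · tauto
  · rintro ⟨h1, h2, h3, h4, h5, h6⟩
    simp_all

theorem mul_le_of_second_moment_le {B Q m n f μ : ℝ} (hn6 : 6 ≤ n) (hm' : 2 * m + 3 ≤ n)
    (hm1 : 1 ≤ m) (hQ : 0 < Q) (hf0 : 0 < f) (hμD : μ * ((n - 2) * (n - 3)) = Q * m ^ 2)
    (hμ0 : 0 < μ)
    (hBsum : B * μ ^ 2 ≤ Q * (m ^ 2 * ((n - 4) * (n - 5) * f)) + Q ^ 2 * ((m * (m - 1)) ^ 2 * f)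
      - 2 * μ * (Q * (m ^ 2 * ((n - 4) * (n - 5) * f)))
      + (n - 2) * (n - 3) * ((n - 4) * (n - 5) * f) * μ ^ 2) :
    B * (Q * m ^ 2) ≤ n ^ 2 * ((n - 2) * (n - 3) * ((n - 4) * (n - 5) * f)) := by
  obtain ⟨D, hD⟩ : ∃ D : ℝ, D = (n - 2) * (n - 3) := ⟨_, rfl⟩
  obtain ⟨G, hG⟩ : ∃ G : ℝ, G = (n - 4) * (n - 5) := ⟨_, rfl⟩
  rw [← hD] at hμD
  rw [← hD, ← hG] at hBsum ⊢
  have hD0 : 0 < D := by rw [hD]; nlinarith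
  have hG0 : 0 < G := by rw [hG]; nlinarith
  have hcov : (m - 1) ^ 2 * D ≤ m ^ 2 * G := by
    have e1 : (m - 1) * (n - 3) ≤ m * (n - 5) := by nlinarith
    have e2 : (m - 1) * (n - 2) ≤ m * (n - 4) := by nlinarith
    have := mul_le_mul e1 e2 (mul_nonneg (by linarith) (by linarith)) (mul_nonneg (by linarith) (by linarith))
    rw [hD, hG]
    nlinarith
  have hcov' : Q ^ 2 * ((m * (m - 1)) ^ 2 * f) ≤ μ * (Q * (m ^ 2 * (G * f))) := by
    rw [← mul_le_mul_iff_left₀ hD0]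
    have : μ * (Q * (m ^ 2 * (G * f))) * D = (Q * m) ^ 2 * f * (m ^ 2 * G) := by
      linear_combination (Q * (m ^ 2 * (G * f))) * hμD
    rw [this]
    calc _ = (Q * m) ^ 2 * f * ((m - 1) ^ 2 * D) := by ring
      _ ≤ _ := by gcongr
  have hkey : B * μ ^ 2 ≤ μ * (D * (G * f)) := by
    have e3 : D * (G * f) * μ ^ 2 = μ * (Q * (m ^ 2 * (G * f))) := by
      linear_combination (G * f * μ) * hμD
    have e4 : μ * (D * (G * f)) = Q * (m ^ 2 * (G * f)) := by
      linear_combination (G * f) * hμD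
    linarith
  have hkey' : B * μ ≤ D * (G * f) := by
    refine le_of_mul_le_mul_left ?_ hμ0
    linarith
  calc B * (Q * m ^ 2) = B * μ * D := by rw [← hμD]; ring
    _ ≤ D * (G * f) * D := by gcongr
    _ ≤ D * (G * f) * n ^ 2 := by
        gcongr
        rw [hD]
        nlinarith
    _ = _ := by ring

/-- A second moment bound: among the permutations with two prescribed values, few send none of the
pairs `(a t, b t)` into `S ×ˢ T`. -/
theorem card_perm_no_hit_mul_le {α : Type*} [Fintype α] [DecidableEq α] (i j u v : α)
    (S T : Finset α) (m Q : ℕ) (a b : ℕ → α) (hS : S.card = m) (hT : T.card = m)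
    (hm : 2 * m + 3 ≤ Fintype.card α) (hcard : 6 ≤ Fintype.card α)
    (hp : ∀ t < Q, [i, j, a t, b t].Nodup)
    (hp' : ∀ t < Q, ∀ s < Q, t ≠ s → [i, j, a t, b t, a s, b s].Nodup)
    (huv : u ≠ v) (hST : Disjoint S T) (hu : u ∉ S ∪ T) (hv : v ∉ S ∪ T) :
    ((Finset.univ.filter fun σ : Equiv.Perm α =>
        (σ i = u ∧ σ j = v) ∧ ∀ t < Q, ¬ (σ (a t) ∈ S ∧ σ (b t) ∈ T)).card : ℝ) * (Q * m ^ 2)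
      ≤ (Fintype.card α : ℝ) ^ 2 * (Fintype.card α - 2).factorial := by
  classical
  set n := Fintype.card α with hn
  set E := Finset.univ.filter fun σ : Equiv.Perm α => σ i = u ∧ σ j = v with hE
  let X : ℕ → Equiv.Perm α → ℝ := fun t σ => if σ (a t) ∈ S ∧ σ (b t) ∈ T then 1 else 0
  set f : ℝ := ((n - 6).factorial : ℝ) with hf
  have hf0 : 0 < f := by positivity
  have hf4 : ((n - 4).factorial : ℝ) = (n - 4) * (n - 5) * f := by
    obtain ⟨c, hc⟩ := Nat.exists_eq_add_of_le hcard
    rw [hf, hc, show 6 + c - 4 = c + 2 by omega, show 6 + c - 6 = c by omega,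
      Nat.factorial_succ, Nat.factorial_succ]
    push_cast
    ring
  have hf2 : ((n - 2).factorial : ℝ) = (n - 2) * (n - 3) * ((n - 4) * (n - 5) * f) := by
    rw [← hf4]
    obtain ⟨c, hc⟩ := Nat.exists_eq_add_of_le hcard
    rw [hc, show 6 + c - 4 = c + 2 by omega, show 6 + c - 2 = c + 2 + 2 by omega,
      Nat.factorial_succ (c + 2 + 1), Nat.factorial_succ (c + 2)]
    push_cast
    ring
  have h0 : (E.card : ℝ) = (n - 2).factorial ∨ Q = 0 := by
    rcases Nat.eq_zero_or_pos Q with h | h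
    · exact Or.inr h
    left
    have hij := hp 0 h
    have := card_perm_map_eq [i, j] [u, v] (by simp at hij ⊢; tauto) (by simpa using huv) rfl
    simp only [List.map_cons, List.map_nil, List.cons.injEq, and_true, List.length_cons,
      List.length_nil, zero_add, Nat.reduceAdd] at this
    rw [hE, this]
  have h1 : ∀ t < Q, ∑ σ ∈ E, X t σ = m ^ 2 * ((n - 4) * (n - 5) * f) := by
    intro t ht
    have := card_perm_hit i j u v (a t) (b t) S T (hp t ht) huv hST hu hv
    rw [← hf4, Finset.sum_boole, hE, Finset.filter_filter, this, hS, hT]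
    push_cast
    ring
  have h2 : ∀ t < Q, ∀ s < Q, t ≠ s → ∑ σ ∈ E, X t σ * X s σ = (m * (m - 1)) ^ 2 * f := by
    intro t ht s hs hts
    have := card_perm_hit_pair i j u v (a t) (b t) (a s) (b s) S T (hp' t ht s hs hts) huv hST
      hu hv
    have hX : ∀ σ, X t σ * X s σ = if (σ (a t) ∈ S ∧ σ (b t) ∈ T) ∧ σ (a s) ∈ S ∧ σ (b s) ∈ T
        then 1 else 0 := fun σ => by
      rw [ite_and]
      simp only [X]
      split_ifs <;> simp
    simp only [hX]
    rw [Finset.sum_boole, hE, Finset.filter_filter, this, Finset.offDiag_card,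
      Finset.offDiag_card, hS, hT]
    have : ((m * m - m : ℕ) : ℝ) = m * (m - 1) := by
      rw [Nat.cast_sub (Nat.le_mul_self m)]
      push_cast
      ring
    push_cast
    rw [this]
    ring
  rcases h0 with h0 | h0
  swap
  · subst h0
    simp
    positivity
  rcases Nat.eq_zero_or_pos (Q * m ^ 2) with hQ | hQ
  · have hQ' : (Q * m ^ 2 : ℝ) = 0 := by exact_mod_cast hQ
    rw [hQ']
    simp
    positivity
  have hQ' : (0 : ℝ) < Q * m ^ 2 := by exact_mod_cast hQ
  set N : Equiv.Perm α → ℝ := fun σ => ∑ t ∈ Finset.range Q, X t σ with hN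
  have hN1 : ∑ σ ∈ E, N σ = Q * (m ^ 2 * ((n - 4) * (n - 5) * f)) := by
    rw [hN, Finset.sum_comm, Finset.sum_congr rfl fun t ht => h1 t (Finset.mem_range.1 ht)]
    simp
  have hN2 : ∑ σ ∈ E, N σ ^ 2
      ≤ Q * (m ^ 2 * ((n - 4) * (n - 5) * f)) + Q ^ 2 * ((m * (m - 1)) ^ 2 * f) := by
    have hsq : ∑ σ ∈ E, N σ ^ 2
        = ∑ t ∈ Finset.range Q, ∑ s ∈ Finset.range Q, ∑ σ ∈ E, X t σ * X s σ := by
      simp_rw [hN, sq, Finset.sum_mul_sum]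
      rw [Finset.sum_comm]
      exact Finset.sum_congr rfl fun t _ => Finset.sum_comm
    have hts : ∀ t ∈ Finset.range Q, ∀ s ∈ Finset.range Q, ∑ σ ∈ E, X t σ * X s σ
        ≤ (if t = s then m ^ 2 * ((n - 4) * (n - 5) * f) else 0) + (m * (m - 1)) ^ 2 * f := by
      intro t ht s hs
      split_ifs with h
      · subst h
        have hX : ∀ σ, X t σ * X t σ = X t σ := fun σ => by simp [X]
        simp only [hX]
        rw [h1 t (Finset.mem_range.1 ht)]
        have : 0 ≤ (m * (m - 1) : ℝ) ^ 2 * f := by positivity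
        linarith
      · rw [h2 t (Finset.mem_range.1 ht) s (Finset.mem_range.1 hs) h]
        simp
    rw [hsq]
    refine (Finset.sum_le_sum fun t ht => Finset.sum_le_sum (hts t ht)).trans (le_of_eq ?_)
    simp only [Finset.sum_add_distrib, Finset.sum_ite_eq, Finset.sum_const, Finset.card_range,
      nsmul_eq_mul]
    rw [Finset.sum_congr rfl fun t ht => if_pos ht]
    simp
    ring
  have hn6 : (6 : ℝ) ≤ n := by exact_mod_cast hcard
  have hm' : (2 * m + 3 : ℝ) ≤ n := by exact_mod_cast hm
  set B := (Finset.univ.filter fun σ : Equiv.Perm α =>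
        (σ i = u ∧ σ j = v) ∧ ∀ t < Q, ¬ (σ (a t) ∈ S ∧ σ (b t) ∈ T)) with hB
  have hD0 : (0 : ℝ) < (n - 2) * (n - 3) := mul_pos (by linarith) (by linarith)
  obtain ⟨μ, hμ⟩ : ∃ μ : ℝ, μ = Q * m ^ 2 / ((n - 2) * (n - 3)) := ⟨_, rfl⟩
  have hμD : μ * ((n - 2) * (n - 3)) = Q * m ^ 2 := by rw [hμ, div_mul_cancel₀ _ hD0.ne']
  have hμ0 : 0 < μ := hμ ▸ div_pos hQ' hD0
  have hBsum : B.card * μ ^ 2 ≤ ∑ σ ∈ E, (N σ - μ) ^ 2 := by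
    calc (B.card : ℝ) * μ ^ 2 = ∑ σ ∈ B, (N σ - μ) ^ 2 := by
          rw [← nsmul_eq_mul, ← Finset.sum_const]
          refine Finset.sum_congr rfl fun σ hσ => ?_
          have : N σ = 0 := Finset.sum_eq_zero fun t ht =>
            if_neg ((Finset.mem_filter.1 hσ).2.2 t (Finset.mem_range.1 ht))
          rw [this]
          ring
      _ ≤ _ := by
          refine Finset.sum_le_sum_of_subset_of_nonneg ?_ fun _ _ _ => sq_nonneg _
          intro σ hσ
          simp only [hB, hE, Finset.mem_filter] at hσ ⊢
          tauto
  have hexp : ∑ σ ∈ E, (N σ - μ) ^ 2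
      = ∑ σ ∈ E, N σ ^ 2 - 2 * μ * ∑ σ ∈ E, N σ + E.card * μ ^ 2 := by
    rw [Finset.mul_sum, ← Finset.sum_sub_distrib, ← nsmul_eq_mul, ← Finset.sum_const,
      ← Finset.sum_add_distrib]
    exact Finset.sum_congr rfl fun _ _ => by ring
  rw [hexp, hN1, h0, hf2] at hBsum
  rw [hf2]
  have hm1 : (1 : ℝ) ≤ m := by
    have : m ≠ 0 := by rintro rfl; simp at hQ
    exact_mod_cast Nat.one_le_iff_ne_zero.2 this
  have hQ1 : (0 : ℝ) < Q := by
    have : Q ≠ 0 := by rintro rfl; simp at hQ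
    exact_mod_cast Nat.pos_of_ne_zero this
  exact mul_le_of_second_moment_le hn6 hm' hm1 hQ1 hf0 hμD hμ0 (by linarith)

/-- A permutation of `{1, …, k}`, extended by zero to a function on `ℕ`. -/
def permExtendZero (k : ℕ) (σ : Equiv.Perm (Finset.Icc 1 k)) (x : ℕ) : ℕ :=
  if h : x ∈ Finset.Icc 1 k then σ ⟨x, h⟩ else 0

theorem permExtendZero_of_mem {k x : ℕ} (σ : Equiv.Perm (Finset.Icc 1 k))
    (hx : x ∈ Finset.Icc 1 k) : permExtendZero k σ x = σ ⟨x, hx⟩ := dif_pos hx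

theorem permExtendZero_of_notMem {k x : ℕ} (σ : Equiv.Perm (Finset.Icc 1 k))
    (hx : x ∉ Finset.Icc 1 k) : permExtendZero k σ x = 0 := dif_neg hx

theorem permExtendZero_le {k : ℕ} (σ : Equiv.Perm (Finset.Icc 1 k)) (x : ℕ) :
    permExtendZero k σ x ≤ k := by
  unfold permExtendZero
  split_ifs with h
  · exact (Finset.mem_Icc.1 (σ ⟨x, h⟩).2).2
  · exact Nat.zero_le k

theorem permExtendZero_pos {k x : ℕ} (σ : Equiv.Perm (Finset.Icc 1 k))
    (hx : x ∈ Finset.Icc 1 k) : 1 ≤ permExtendZero k σ x := by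
  rw [permExtendZero_of_mem σ hx]
  exact (Finset.mem_Icc.1 (σ ⟨x, hx⟩).2).1

theorem mem_of_permExtendZero_pos {k x : ℕ} {σ : Equiv.Perm (Finset.Icc 1 k)}
    (hx : 1 ≤ permExtendZero k σ x) : x ∈ Finset.Icc 1 k := by
  by_contra h
  simp [permExtendZero_of_notMem σ h] at hx

theorem permExtendZero_injective (k : ℕ) : Function.Injective (permExtendZero k) := by
  intro σ τ h
  ext ⟨x, hx⟩
  rw [← permExtendZero_of_mem σ hx, h, permExtendZero_of_mem]

theorem range_permExtendZero (k : ℕ) : Set.range (permExtendZero k) =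
    {π : ℕ → ℕ | Set.BijOn π (Set.Icc 1 k) (Set.Icc 1 k) ∧ ∀ x, x ∉ Set.Icc 1 k → π x = 0} := by
  ext π
  constructor
  · rintro ⟨σ, rfl⟩
    refine ⟨⟨fun x hx => ⟨permExtendZero_pos σ (Finset.mem_Icc.2 hx), permExtendZero_le σ x⟩,
      fun x hx y hy h => ?_, fun y hy => ?_⟩, fun x hx => permExtendZero_of_notMem σ fun h => hx
        (Finset.mem_Icc.1 h)⟩
    · rw [permExtendZero_of_mem σ (Finset.mem_Icc.2 hx),
        permExtendZero_of_mem σ (Finset.mem_Icc.2 hy)] at h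
      simpa using σ.injective (Subtype.ext h)
    · refine ⟨σ.symm ⟨y, Finset.mem_Icc.2 hy⟩, Finset.mem_Icc.1 (σ.symm _).2, ?_⟩
      rw [permExtendZero_of_mem σ (σ.symm _).2]
      simp
  · rintro ⟨hbij, hzero⟩
    have hinj : Function.Injective fun x : Finset.Icc 1 k =>
        (⟨π x, Finset.mem_Icc.2 (hbij.mapsTo (Finset.mem_Icc.1 x.2))⟩ : Finset.Icc 1 k) :=
      fun x y h => Subtype.ext (hbij.injOn (Finset.mem_Icc.1 x.2) (Finset.mem_Icc.1 y.2)
        (Subtype.ext_iff.1 h))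
    refine ⟨Equiv.ofBijective _ (Finite.injective_iff_bijective.1 hinj), funext fun x => ?_⟩
    by_cases hx : x ∈ Finset.Icc 1 k
    · rw [permExtendZero_of_mem _ hx]
      rfl
    · rw [permExtendZero_of_notMem _ hx, hzero x fun h => hx (Finset.mem_Icc.2 h)]

open scoped Classical in
theorem ncard_bijOn_Icc_and (k : ℕ) (R : (ℕ → ℕ) → Prop) :
    {π : ℕ → ℕ | (Set.BijOn π (Set.Icc 1 k) (Set.Icc 1 k) ∧ ∀ x, x ∉ Set.Icc 1 k → π x = 0) ∧
      R π}.ncard = (Finset.univ.filter fun σ => R (permExtendZero k σ)).card := by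
  have : {π : ℕ → ℕ | (Set.BijOn π (Set.Icc 1 k) (Set.Icc 1 k) ∧
      ∀ x, x ∉ Set.Icc 1 k → π x = 0) ∧ R π}
      = permExtendZero k '' {σ | R (permExtendZero k σ)} := by
    ext π
    have h := Set.ext_iff.1 (range_permExtendZero k) π
    simp only [Set.mem_range, Set.mem_ofPred_eq, Set.mem_image] at h ⊢
    rw [← h]
    constructor
    · rintro ⟨⟨σ, rfl⟩, h'⟩
      exact ⟨σ, h', rfl⟩
    · rintro ⟨σ, h', rfl⟩
      exact ⟨⟨σ, rfl⟩, h'⟩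
  rw [this, Set.ncard_image_of_injective _ (permExtendZero_injective k), Set.ncard_eq_toFinset_card']
  simp

theorem ncard_bijOn_Icc (k : ℕ) :
    {π : ℕ → ℕ | Set.BijOn π (Set.Icc 1 k) (Set.Icc 1 k) ∧
      ∀ x, x ∉ Set.Icc 1 k → π x = 0}.ncard = k.factorial := by
  rw [← range_permExtendZero, ← Set.image_univ,
    Set.ncard_image_of_injective _ (permExtendZero_injective k), Set.ncard_univ,
    Nat.card_eq_fintype_card, Fintype.card_perm]
  simp

open Finset in
theorem card_permExtendZero_eq_le {k x y u v : ℕ} (hxy : x ≠ y) (hu : 1 ≤ u) (hv : 1 ≤ v) :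
    #{σ | permExtendZero k σ x = u ∧ permExtendZero k σ y = v} ≤ (k - 2).factorial := by
  rcases Finset.eq_empty_or_nonempty
    (univ.filter fun σ => permExtendZero k σ x = u ∧ permExtendZero k σ y = v) with h | ⟨τ, hτ⟩
  · simp [h]
  simp only [mem_filter, mem_univ, true_and] at hτ
  have hx := mem_of_permExtendZero_pos (hτ.1.symm ▸ hu)
  have hy := mem_of_permExtendZero_pos (hτ.2.symm ▸ hv)
  have hl : ([⟨x, hx⟩, ⟨y, hy⟩] : List (Icc 1 k)).Nodup := by simpa using hxy
  have := card_perm_map_eq _ _ hl (hl.map τ.injective) (by simp)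
  simp only [List.length_cons, List.length_nil, Fintype.card_coe, Nat.card_Icc,
    Nat.add_sub_cancel] at this
  rw [← this]
  refine card_le_card fun σ hσ => ?_
  simp only [mem_filter, mem_univ, true_and, ← hτ.1, ← hτ.2] at hσ ⊢
  rw [permExtendZero_of_mem σ hx, permExtendZero_of_mem τ hx, permExtendZero_of_mem σ hy,
    permExtendZero_of_mem τ hy] at hσ
  simp [Subtype.ext hσ.1, Subtype.ext hσ.2]

open Finset in
theorem card_permExtendZero_no_hit_mul_le {k i j m Q : ℕ} (hi : 1 ≤ i) (hj : j ≤ k)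
    (hm : 2 * m + 3 ≤ k) (hk : 6 ≤ k) (hQ : i + 2 * Q + 2 ≤ j) :
    (#{σ | (permExtendZero k σ i = 1 ∧ permExtendZero k σ j = k) ∧ ∀ t < Q,
      ¬ (permExtendZero k σ (i + 2 + 2 * t) ∈ Icc 2 (m + 1) ∧
        permExtendZero k σ (i + 3 + 2 * t) ∈ Icc (k - m) (k - 1))} : ℝ) * (Q * m ^ 2)
      ≤ (k : ℝ) ^ 2 * (k - 2).factorial := by
  have h1 : 1 ∈ Icc 1 k := by simp; omega
  let e : ℕ → Icc 1 k := fun x => if h : x ∈ Icc 1 k then ⟨x, h⟩ else ⟨1, h1⟩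
  have he : ∀ x ∈ Icc 1 k, (e x : ℕ) = x := fun x hx => by simp only [e]; rw [dif_pos hx]
  have hφ : ∀ σ, ∀ x, 1 ≤ x → x ≤ k → permExtendZero k σ x = σ (e x) := fun σ x hx hx' => by
    have := mem_Icc.2 ⟨hx, hx'⟩
    rw [permExtendZero_of_mem σ this]
    simp only [e]
    rw [dif_pos this]
  have hnodup : ∀ l : List ℕ, l.Nodup → (∀ x ∈ l, x ∈ Icc 1 k) → (l.map e).Nodup :=
    fun l hl hmem => hl.map_on fun x hx y hy h => by
      rw [← he x (hmem x hx), h, he y (hmem y hy)]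
  have hS : #((Icc 2 (m + 1)).subtype (· ∈ Icc 1 k)) = m := by
    rw [card_subtype, filter_true_of_mem fun x hx => by rw [mem_Icc] at hx ⊢; omega]
    simp
  have hT : #((Icc (k - m) (k - 1)).subtype (· ∈ Icc 1 k)) = m := by
    rw [card_subtype, filter_true_of_mem fun x hx => by rw [mem_Icc] at hx ⊢; omega]
    rw [Nat.card_Icc]
    omega
  have key := card_perm_no_hit_mul_le (e i) (e j) (e 1) (e k)
    ((Icc 2 (m + 1)).subtype (· ∈ Icc 1 k)) ((Icc (k - m) (k - 1)).subtype (· ∈ Icc 1 k)) m Q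
    (fun t => e (i + 2 + 2 * t)) (fun t => e (i + 3 + 2 * t)) hS hT (by simpa using hm)
    (by simpa using hk)
    (fun t ht => hnodup [i, j, i + 2 + 2 * t, i + 3 + 2 * t] (by simp; omega)
      (by simp; omega))
    (fun t ht s hs hts => hnodup
      [i, j, i + 2 + 2 * t, i + 3 + 2 * t, i + 2 + 2 * s, i + 3 + 2 * s] (by simp; omega)
      (by simp; omega))
    (fun h => by
      have := congrArg Subtype.val h
      rw [he 1 h1, he k (by simp; omega)] at this
      omega)
    (by
      rw [disjoint_left]
      intro x hx hx'
      simp only [mem_subtype, mem_Icc] at hx hx'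
      omega)
    (by
      simp only [mem_union, mem_subtype, he 1 h1, mem_Icc]
      omega)
    (by
      simp only [mem_union, mem_subtype, he k (by simp; omega : k ∈ Icc 1 k), mem_Icc]
      omega)
  simp only [Fintype.card_coe, Nat.card_Icc, Nat.add_sub_cancel] at key
  refine le_trans (le_of_eq ?_) key
  congr 3
  ext σ
  simp only [mem_filter, mem_univ, true_and, mem_subtype]
  have hk1 : k ∈ Icc 1 k := by simp; omega
  refine and_congr (and_congr ?_ ?_) (forall₂_congr fun t ht => ?_)
  · rw [hφ σ i hi (by omega), Subtype.ext_iff, he 1 h1]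
  · rw [hφ σ j (by omega) hj, Subtype.ext_iff, he k hk1]
  · rw [hφ σ _ (by omega) (by omega), hφ σ _ (by omega) (by omega)]

open Finset in
theorem card_biUnion_permExtendZero_eq_le {ι : Type*} (I : Finset ι) {k : ℕ} (x y u v : ι → ℕ)
    (h : ∀ p ∈ I, x p ≠ y p ∧ 1 ≤ u p ∧ 1 ≤ v p) :
    #(I.biUnion fun p => {σ | permExtendZero k σ (x p) = u p ∧ permExtendZero k σ (y p) = v p})
      ≤ #I * (k - 2).factorial :=
  card_biUnion_le_card_mul _ _ _ fun p hp =>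
    card_permExtendZero_eq_le (h p hp).1 (h p hp).2.1 (h p hp).2.2

open Finset in
theorem card_permExtendZero_no_jump_le {k i j : ℕ} {y : ℝ} (hy : 200 ≤ y) (hk : (k : ℝ) = y ^ 4)
    (hi : 1 ≤ i) (hj : j ≤ k) (hij : y ^ 3 ≤ (j : ℝ) - i) :
    (#{σ | (permExtendZero k σ i = 1 ∧ permExtendZero k σ j = k) ∧
      ∀ t < (j - i - 2) / 2, ¬ (permExtendZero k σ (i + 2 + 2 * t) ∈ Icc 2 (⌊y ^ 3 / 2⌋₊ + 1) ∧
        permExtendZero k σ (i + 3 + 2 * t) ∈ Icc (k - ⌊y ^ 3 / 2⌋₊) (k - 1))} : ℝ)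
      ≤ 64 / y * (k - 2).factorial := by
  have hy0 : 0 < y := by linarith
  have hM : (200 : ℝ) ≤ y ^ 3 := by nlinarith [pow_le_pow_left₀ (by norm_num) hy 2]
  have hkM : 200 * y ^ 3 ≤ (k : ℝ) := by rw [hk, pow_succ y 3]; nlinarith
  set m := ⌊y ^ 3 / 2⌋₊ with hmdef
  have hm1 : (m : ℝ) ≤ y ^ 3 / 2 := Nat.floor_le (by positivity)
  have hm2 : y ^ 3 / 2 < m + 1 := Nat.lt_floor_add_one _
  have hij' : i + 200 ≤ j := by
    have : (i + 200 : ℝ) ≤ j := by linarith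
    exact_mod_cast this
  have hmk : 2 * m + 3 ≤ k := by
    have : (2 * m + 3 : ℝ) ≤ k := by linarith
    exact_mod_cast this
  have hQ : ((j : ℝ) - i - 3) / 2 ≤ ((j - i - 2) / 2 : ℕ) := by
    have h : j ≤ i + 3 + 2 * ((j - i - 2) / 2) := by omega
    have h' : (j : ℝ) ≤ i + 3 + 2 * ((j - i - 2) / 2 : ℕ) := by exact_mod_cast h
    linarith
  have key := card_permExtendZero_no_hit_mul_le (k := k) (i := i) (j := j) (m := m)
    (Q := (j - i - 2) / 2) hi hj hmk (by omega) (by omega)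
  have hlow : y ^ 9 / 64 ≤ ((j - i - 2) / 2 : ℕ) * (m : ℝ) ^ 2 := by
    calc y ^ 9 / 64 = (y ^ 3 / 4) * (y ^ 3 / 4) ^ 2 := by ring
      _ ≤ _ := by
        gcongr
        · linarith
        · linarith
  have key' := (mul_le_mul_of_nonneg_left hlow (Nat.cast_nonneg _)).trans key
  refine le_of_mul_le_mul_right (key'.trans (le_of_eq ?_)) (by positivity : 0 < y ^ 9 / 64)
  rw [hk]
  field_simp

open Finset in
open scoped Classical in
theorem card_permExtendZero_bad_le {k : ℕ} {y : ℝ} (hy : 200 ≤ y) (hk : (k : ℝ) = y ^ 4) :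
    (#{σ | ¬ ∀ i j, 1 ≤ i → i ≤ k → 1 ≤ j → j ≤ k →
      permExtendZero k σ i = 1 → permExtendZero k σ j = k → i < j →
        (y ^ 3 < (permExtendZero k σ (i + 1) : ℝ) ∧
          (permExtendZero k σ (j - 1) : ℝ) < (k : ℝ) - y ^ 3 ∧ y ^ 3 ≤ (j : ℝ) - (i : ℝ) ∧
          ∃ x, i + 1 < x ∧ x < j - 1 ∧ (permExtendZero k σ x : ℝ) < y ^ 3 ∧
            (k : ℝ) - y ^ 3 < (permExtendZero k σ (x + 1) : ℝ))} : ℝ)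
      ≤ 200 * y⁻¹ * k.factorial := by
  have hy0 : 0 < y := by linarith
  have hM : (200 : ℝ) ≤ y ^ 3 := by nlinarith [pow_le_pow_left₀ (by norm_num) hy 2]
  have hkM : 200 * y ^ 3 ≤ (k : ℝ) := by rw [hk, pow_succ y 3]; nlinarith
  set m := ⌊y ^ 3 / 2⌋₊ with hmdef
  have hm1 : (m : ℝ) ≤ y ^ 3 / 2 := Nat.floor_le (by positivity)
  obtain ⟨F, hF⟩ : ∃ F, F = ⌊y ^ 3⌋₊ := ⟨_, rfl⟩
  have hF1 : (F : ℝ) ≤ y ^ 3 := hF ▸ Nat.floor_le (by positivity)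
  have hFk : F + 2 ≤ k := by
    have : (F + 2 : ℝ) ≤ k := by linarith
    exact_mod_cast this
  have hle : ∀ n : ℕ, (n : ℝ) ≤ y ^ 3 → n ≤ F := fun n hn => hF ▸ Nat.le_floor hn
  set A := (Icc 1 k ×ˢ Icc 1 F).biUnion fun p => univ.filter fun σ =>
    permExtendZero k σ p.1 = 1 ∧ permExtendZero k σ (p.1 + 1) = p.2 with hA
  set B := (Icc 1 k ×ˢ Icc (k - F) k).biUnion fun p => univ.filter fun σ =>
    permExtendZero k σ p.1 = k ∧ permExtendZero k σ (p.1 - 1) = p.2 with hB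
  set C := (Icc 1 k ×ˢ Icc 1 F).biUnion fun p => univ.filter fun σ =>
    permExtendZero k σ p.1 = 1 ∧ permExtendZero k σ (p.1 + p.2) = k with hC
  set D := ((Icc 1 k ×ˢ Icc 1 k).filter fun p => y ^ 3 ≤ (p.2 : ℝ) - p.1).biUnion fun p =>
    univ.filter fun σ => (permExtendZero k σ p.1 = 1 ∧ permExtendZero k σ p.2 = k) ∧
      ∀ t < (p.2 - p.1 - 2) / 2, ¬ (permExtendZero k σ (p.1 + 2 + 2 * t) ∈ Icc 2 (m + 1) ∧
        permExtendZero k σ (p.1 + 3 + 2 * t) ∈ Icc (k - m) (k - 1)) with hD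
  have hsub : (univ.filter fun σ => ¬ ∀ i j, 1 ≤ i → i ≤ k → 1 ≤ j → j ≤ k →
      permExtendZero k σ i = 1 → permExtendZero k σ j = k → i < j →
        (y ^ 3 < (permExtendZero k σ (i + 1) : ℝ) ∧
          (permExtendZero k σ (j - 1) : ℝ) < (k : ℝ) - y ^ 3 ∧ y ^ 3 ≤ (j : ℝ) - (i : ℝ) ∧
          ∃ x, i + 1 < x ∧ x < j - 1 ∧ (permExtendZero k σ x : ℝ) < y ^ 3 ∧
            (k : ℝ) - y ^ 3 < (permExtendZero k σ (x + 1) : ℝ))) ⊆ A ∪ B ∪ C ∪ D := by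
    intro σ hσ
    rw [mem_filter] at hσ
    obtain ⟨-, hσ⟩ := hσ
    by_contra hmem
    simp only [mem_union, not_or] at hmem
    obtain ⟨⟨⟨hnA, hnB⟩, hnC⟩, hnD⟩ := hmem
    refine hσ fun i j hi hi' hj hj' hσi hσj hij => ?_
    have h3 : y ^ 3 ≤ (j : ℝ) - i := by
      by_contra! hlt
      refine hnC (mem_biUnion.2 ⟨(i, j - i), ?_, ?_⟩)
      · have := hle (j - i) (by rw [Nat.cast_sub hij.le]; exact hlt.le)
        simp only [mem_product, mem_Icc]
        omega
      · simp only [mem_filter, mem_univ, true_and]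
        exact ⟨hσi, by rw [Nat.add_sub_cancel' hij.le]; exact hσj⟩
    refine ⟨?_, ?_, h3, ?_⟩
    · by_contra! hlt
      refine hnA (mem_biUnion.2 ⟨(i, permExtendZero k σ (i + 1)), ?_, ?_⟩)
      · have h1 := hle _ hlt
        have h2 := permExtendZero_pos σ (x := i + 1) (mem_Icc.2 (by omega))
        simp only [mem_product, mem_Icc]
        omega
      · simpa using hσi
    · by_contra! hlt
      refine hnB (mem_biUnion.2 ⟨(j, permExtendZero k σ (j - 1)), ?_, ?_⟩)
      · have h1 := permExtendZero_le σ (j - 1)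
        have h2 := hle (k - permExtendZero k σ (j - 1)) (by
          rw [Nat.cast_sub h1]
          linarith)
        simp only [mem_product, mem_Icc]
        omega
      · simpa using hσj
    · by_contra! hno
      refine hnD (mem_biUnion.2 ⟨(i, j), ?_, ?_⟩)
      · simp only [mem_filter, mem_product, mem_Icc]
        exact ⟨⟨⟨hi, hi'⟩, hj, hj'⟩, h3⟩
      · simp only [mem_filter, mem_univ, true_and]
        refine ⟨⟨hσi, hσj⟩, fun t ht ⟨hS, hT⟩ => ?_⟩
        rw [mem_Icc] at hS hT
        have hS' : (permExtendZero k σ (i + 2 + 2 * t) : ℝ) ≤ m + 1 := by exact_mod_cast hS.2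
        have hT' : (k : ℝ) ≤ permExtendZero k σ (i + 3 + 2 * t) + m := by
          exact_mod_cast Nat.sub_le_iff_le_add.1 hT.1
        have := hno (i + 2 + 2 * t) (by omega) (by omega) (by linarith)
        rw [show i + 2 + 2 * t + 1 = i + 3 + 2 * t by ring] at this
        linarith
  obtain ⟨f, hf⟩ : ∃ f : ℕ, f = (k - 2).factorial := ⟨_, rfl⟩
  have hcA : #A ≤ k * (F + 1) * f := by
    refine (card_biUnion_permExtendZero_eq_le _ (fun p : ℕ × ℕ => p.1) (fun p => p.1 + 1)
      (fun _ => 1) (fun p => p.2) fun p hp => ?_).trans ?_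
    · simp only [mem_product, mem_Icc] at hp
      omega
    · rw [card_product, Nat.card_Icc, Nat.card_Icc, ← hf]
      gcongr <;> omega
  have hcB : #B ≤ k * (F + 1) * f := by
    refine (card_biUnion_permExtendZero_eq_le _ (fun p : ℕ × ℕ => p.1) (fun p => p.1 - 1)
      (fun _ => k) (fun p => p.2) fun p hp => ?_).trans ?_
    · simp only [mem_product, mem_Icc] at hp
      omega
    · rw [card_product, Nat.card_Icc, Nat.card_Icc, ← hf]
      gcongr <;> omega
  have hcC : #C ≤ k * (F + 1) * f := by
    refine (card_biUnion_permExtendZero_eq_le _ (fun p : ℕ × ℕ => p.1) (fun p => p.1 + p.2)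
      (fun _ => 1) (fun _ => k) fun p hp => ?_).trans ?_
    · simp only [mem_product, mem_Icc] at hp
      omega
    · rw [card_product, Nat.card_Icc, Nat.card_Icc, ← hf]
      gcongr <;> omega
  have hcD : (#D : ℝ) ≤ k ^ 2 * (64 / y * f) := by
    have h1 : (#D : ℝ) ≤ _ := Nat.cast_le.2 card_biUnion_le
    rw [Nat.cast_sum] at h1
    refine h1.trans ((sum_le_card_nsmul _ _ (64 / y * f) fun p hp => ?_).trans ?_)
    · simp only [mem_filter, mem_product, mem_Icc] at hp
      rw [hf]
      exact card_permExtendZero_no_jump_le hy hk hp.1.1.1 hp.1.2.2 hp.2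
    · rw [nsmul_eq_mul]
      gcongr
      have := card_filter_le (Icc 1 k ×ˢ Icc 1 k) fun p : ℕ × ℕ => y ^ 3 ≤ (p.2 : ℝ) - p.1
      rw [card_product, Nat.card_Icc, Nat.add_sub_cancel, ← sq] at this
      exact_mod_cast this
  have hcard : (#(A ∪ B ∪ C ∪ D) : ℝ) ≤ #A + #B + #C + #D := by
    have h1 := card_union_le (A ∪ B ∪ C) D
    have h2 := card_union_le (A ∪ B) C
    have h3 := card_union_le A B
    exact_mod_cast h1.trans (by omega)
  have hfac : (k.factorial : ℝ) = k * (k - 1) * f := by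
    obtain ⟨c, rfl⟩ := Nat.exists_eq_add_of_le (show 2 ≤ k by omega)
    rw [hf, show 2 + c - 2 = c by omega, show 2 + c = c + 1 + 1 by omega, Nat.factorial_succ,
      Nat.factorial_succ]
    push_cast
    ring
  have hABC : ∀ n : ℕ, n ≤ k * (F + 1) * f → (n : ℝ) ≤ k * (y ^ 3 + 1) * f := fun n hn => by
    have : (n : ℝ) ≤ k * (F + 1) * f := by exact_mod_cast hn
    refine this.trans ?_
    gcongr
  calc _ ≤ (#(A ∪ B ∪ C ∪ D) : ℝ) := by exact_mod_cast card_le_card hsub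
    _ ≤ 3 * (k * (y ^ 3 + 1) * f) + k ^ 2 * (64 / y * f) := by
      linarith [hABC _ hcA, hABC _ hcB, hABC _ hcC]
    _ = y⁻¹ * k * f * (3 * (y ^ 4 + y) + 64 * k) := by field_simp
    _ ≤ y⁻¹ * k * f * (200 * (k - 1)) := by
      gcongr
      rw [hk]
      nlinarith [pow_succ y 3]
    _ = _ := by rw [hfac]; ring


/-- For a uniformly random permutation `π` of `{1,…,k}` (modelled as the bijections of
`Icc 1 k` that vanish outside), with probability `1 - O(k^{-1/4})` the following holds:
whenever `π i = 1`, `π j = k` and `i < j`, we have `π (i+1) > k^{3/4}`,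
`π (j-1) < k - k^{3/4}`, `j - i ≥ k^{3/4}`, and there is `i+1 < x < j-1` with
`π x < k^{3/4}` and `π (x+1) > k - k^{3/4}`. -/
theorem stmt_12 :
    ∃ C : ℝ, 0 < C ∧ ∀ k : ℕ, 1 ≤ k →
      (1 - C * (k : ℝ) ^ (-(1 : ℝ) / 4)) *
        (({π : ℕ → ℕ | Set.BijOn π (Set.Icc 1 k) (Set.Icc 1 k) ∧
            ∀ x, x ∉ Set.Icc 1 k → π x = 0}.ncard : ℝ))
      ≤ (({π : ℕ → ℕ | (Set.BijOn π (Set.Icc 1 k) (Set.Icc 1 k) ∧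
            ∀ x, x ∉ Set.Icc 1 k → π x = 0) ∧
          ∀ i j, 1 ≤ i → i ≤ k → 1 ≤ j → j ≤ k → π i = 1 → π j = k → i < j →
            ((k : ℝ) ^ ((3 : ℝ) / 4) < (π (i + 1) : ℝ) ∧
             (π (j - 1) : ℝ) < (k : ℝ) - (k : ℝ) ^ ((3 : ℝ) / 4) ∧
             (k : ℝ) ^ ((3 : ℝ) / 4) ≤ (j : ℝ) - (i : ℝ) ∧
             ∃ x, i + 1 < x ∧ x < j - 1 ∧ (π x : ℝ) < (k : ℝ) ^ ((3 : ℝ) / 4) ∧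
               (k : ℝ) - (k : ℝ) ^ ((3 : ℝ) / 4) < (π (x + 1) : ℝ))}.ncard : ℝ)) := by
  refine ⟨200, by norm_num, fun k hk => ?_⟩
  obtain ⟨y, hydef⟩ : ∃ y : ℝ, y = (k : ℝ) ^ ((1 : ℝ) / 4) := ⟨_, rfl⟩
  have hk0 : (0 : ℝ) < k := by exact_mod_cast hk
  have hy0 : 0 < y := hydef ▸ Real.rpow_pos_of_pos hk0 _
  have hy4 : (k : ℝ) = y ^ 4 := by
    rw [hydef, ← Real.rpow_natCast, ← Real.rpow_mul hk0.le]
    norm_num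
  have hy3 : (k : ℝ) ^ ((3 : ℝ) / 4) = y ^ 3 := by
    rw [hydef, ← Real.rpow_natCast, ← Real.rpow_mul hk0.le]
    norm_num
  have hyinv : (k : ℝ) ^ (-(1 : ℝ) / 4) = y⁻¹ := by
    rw [hydef, ← Real.rpow_neg hk0.le]
    norm_num
  rw [ncard_bijOn_Icc_and, ncard_bijOn_Icc, hyinv, hy3]
  rcases lt_or_ge y 200 with hy | hy
  · refine le_trans (mul_nonpos_of_nonpos_of_nonneg ?_ (Nat.cast_nonneg _)) (Nat.cast_nonneg _)
    rw [sub_nonpos, ← div_eq_mul_inv, one_le_div hy0]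
    exact hy.le
  classical
  have hsum := Finset.card_filter_add_card_filter_not (s := Finset.univ)
    (fun σ : Equiv.Perm (Finset.Icc 1 k) => ∀ i j, 1 ≤ i → i ≤ k → 1 ≤ j → j ≤ k →
      permExtendZero k σ i = 1 → permExtendZero k σ j = k → i < j →
        (y ^ 3 < (permExtendZero k σ (i + 1) : ℝ) ∧
          (permExtendZero k σ (j - 1) : ℝ) < (k : ℝ) - y ^ 3 ∧ y ^ 3 ≤ (j : ℝ) - (i : ℝ) ∧
          ∃ x, i + 1 < x ∧ x < j - 1 ∧ (permExtendZero k σ x : ℝ) < y ^ 3 ∧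
            (k : ℝ) - y ^ 3 < (permExtendZero k σ (x + 1) : ℝ)))
  rw [Finset.card_univ, Fintype.card_perm, Fintype.card_coe, Nat.card_Icc,
    Nat.add_sub_cancel] at hsum
  have hbad := card_permExtendZero_bad_le hy hy4
  have hsum' := congrArg (Nat.cast (R := ℝ)) hsum
  push_cast at hsum'
  linarith
end
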